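/- arXiv:0905.0506 — 4 statements merged into one kernel-verified Lean document; each statement's English description precedes it below -/
import Mathlib

section
/- Let E be a real normed vector space of finite dimension m, and let S(E) = {v ∈ E : ‖v‖ = 1} be its unit sphere. Suppose S(E) is covered by k subsets C_1, …, C_k such that each C_i is invariant under the antipodal map v ↦ -v, and each C_i admits a subset A_i ⊆ C_i which is both open and closed in the subspace topology of C_i and satisfies C_i = A_i ∪ (-A_i) and A_i ∩ (-A_i) = ∅. Then m ≤ k. -/
section
open MvPolynomial

noncomputable def bwTm {K : Type*} [CommRing K] {n : ℕ} (d : ℕ) (g : Fin n → MvPolynomial (Fin n) K)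
    (c : Fin n →₀ ℕ) : MvPolynomial (Fin n) K := ∏ i, (X i ^ (c i % d) * g i ^ (c i / d))

noncomputable def bwT {n : ℕ} (d : ℕ) (g : Fin n → MvPolynomial (Fin n) ℝ) :
    MvPolynomial (Fin n) ℝ →ₗ[ℝ] MvPolynomial (Fin n) ℝ :=
  (basisMonomials (Fin n) ℝ).constr ℝ (bwTm d g)

theorem bwT_monomial {n : ℕ} (d : ℕ) (g : Fin n → MvPolynomial (Fin n) ℝ) (c : Fin n →₀ ℕ) (a : ℝ) :
    bwT d g (monomial c a) = a • bwTm d g c := by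
  have h : monomial c a = a • (basisMonomials (Fin n) ℝ) c := by simp [smul_monomial]
  rw [h, map_smul, bwT, Module.Basis.constr_basis]

theorem bwT_eq_sum {n : ℕ} (d : ℕ) (g : Fin n → MvPolynomial (Fin n) ℝ) (p : MvPolynomial (Fin n) ℝ) :
    bwT d g p = ∑ c ∈ p.support, coeff c p • bwTm d g c := by
  conv_lhs => rw [p.as_sum]
  rw [map_sum]
  exact Finset.sum_congr rfl fun c _ => bwT_monomial d g c _

theorem bwTm_degree {K : Type*} [CommRing K] [Nontrivial K] {n : ℕ} (d : ℕ) (g : Fin n → MvPolynomial (Fin n) K)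
    (hg : ∀ i, (g i).totalDegree ≤ d) (c : Fin n →₀ ℕ) :
    (bwTm d g c).totalDegree ≤ ∑ i, c i := by
  refine (totalDegree_finsetProd _ _).trans (Finset.sum_le_sum fun i _ => ?_)
  refine (totalDegree_mul _ _).trans ?_
  have h1 : (X i ^ (c i % d) : MvPolynomial (Fin n) K).totalDegree ≤ c i % d := by

    rw [totalDegree_X_pow]
  have h2 : (g i ^ (c i / d)).totalDegree ≤ c i / d * d :=
    (totalDegree_pow _ _).trans (Nat.mul_le_mul_left _ (hg i))
  have := Nat.mod_add_div' (c i) d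
  omega

theorem bw_le_of_mem {K : Type*} [CommRing K] {n e : ℕ} {p : MvPolynomial (Fin n) K}
    (hp : p.totalDegree ≤ e) {c : Fin n →₀ ℕ} (hc : c ∈ p.support) : ∑ i, c i ≤ e := by
  have := le_totalDegree hc
  rw [Finsupp.sum_fintype _ _ (by simp)] at this
  omega

theorem bwT_degree {n : ℕ} (d : ℕ) (g : Fin n → MvPolynomial (Fin n) ℝ)
    (hg : ∀ i, (g i).totalDegree ≤ d) (p : MvPolynomial (Fin n) ℝ) (e : ℕ) (hp : p.totalDegree ≤ e) :
    (bwT d g p).totalDegree ≤ e := by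
  rw [bwT_eq_sum]
  refine totalDegree_finsetSum_le fun c hc => ?_
  exact (totalDegree_smul_le _ _).trans ((bwTm_degree d g hg c).trans (bw_le_of_mem hp hc))

theorem bwTm_add {n : ℕ} (d : ℕ) (hd : 0 < d) (g : Fin n → MvPolynomial (Fin n) ℝ) (i : Fin n)
    (c : Fin n →₀ ℕ) : bwTm d g (c + Finsupp.single i d) = g i * bwTm d g c := by
  unfold bwTm
  rw [← Finset.mul_prod_erase _ _ (Finset.mem_univ i),
    ← Finset.mul_prod_erase (a := i) _ (fun i => X i ^ (c i % d) * g i ^ (c i / d)) (Finset.mem_univ i)]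
  have : ∏ x ∈ Finset.univ.erase i, (X x ^ ((c + Finsupp.single i d) x % d) * g x ^ ((c + Finsupp.single i d) x / d)) = ∏ x ∈ Finset.univ.erase i, (X x ^ (c x % d) * g x ^ (c x / d)) := by
    refine Finset.prod_congr rfl fun x hx => ?_
    have : Finsupp.single i d x = 0 := by
      rw [Finsupp.single_apply, if_neg]
      exact fun h => (Finset.ne_of_mem_erase hx) h.symm
    simp [this]
  rw [this]
  simp [Nat.add_div_right _ hd, pow_succ]
  ring

theorem bwT_mul {n : ℕ} (d : ℕ) (hd : 0 < d) (g : Fin n → MvPolynomial (Fin n) ℝ) (i : Fin n)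
    (p : MvPolynomial (Fin n) ℝ) : bwT d g (X i ^ d * p) = g i * bwT d g p := by
  induction p using MvPolynomial.induction_on' with
  | monomial c a =>
    rw [X_pow_eq_monomial, monomial_mul, bwT_monomial, bwT_monomial, add_comm, bwTm_add d hd]
    simp
  | add p q hp hq => rw [mul_add, map_add, hp, hq, map_add, mul_add]

theorem bwTm_zero {K : Type*} [CommRing K] {n : ℕ} (d : ℕ) (c : Fin n →₀ ℕ) :
    bwTm d (fun i => (X i ^ d : MvPolynomial (Fin n) K)) c = monomial c 1 := by
  rw [monomial_eq, C_1, one_mul, Finsupp.prod_fintype _ _ (by simp)]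
  refine Finset.prod_congr rfl fun i _ => ?_
  rw [← pow_mul, ← pow_add, Nat.mod_add_div]

theorem bwTm_map {K L : Type*} [CommRing K] [CommRing L] (φ : K →+* L) {n : ℕ} (d : ℕ)
    (g : Fin n → MvPolynomial (Fin n) K) (c : Fin n →₀ ℕ) :
    map φ (bwTm d g c) = bwTm d (fun i => map φ (g i)) c := by
  simp [bwTm, map_prod]

/-- surjectivity in filtration degree e -/
def bwSurj {n : ℕ} (d : ℕ) (g : Fin n → MvPolynomial (Fin n) ℝ) (e : ℕ) : Prop :=
  ∀ p : MvPolynomial (Fin n) ℝ, p.totalDegree ≤ e → ∃ q, q.totalDegree ≤ e ∧ bwT d g q = p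

theorem bw_generic {n : ℕ} (d : ℕ) (h : Fin n → MvPolynomial (Fin n) ℝ)
    (hh : ∀ i, (h i).totalDegree ≤ d) (e : ℕ) :
    {s : ℝ | ¬ bwSurj d (fun i => X i ^ d + C s * h i) e}.Finite := by
  classical
  let I := {c : Fin n →₀ ℕ // ∑ i, c i ≤ e}
  have : Finite I := by
    refine Finite.of_injective (β := Fin n → Fin (e+1)) (fun c i => ⟨c.1 i, ?_⟩) ?_
    · have := Finset.single_le_sum (f := c.1) (fun _ _ => Nat.zero_le _) (Finset.mem_univ i)
      have := c.2
      omega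
    · intro a b hab
      apply Subtype.ext
      ext i
      simpa using congrFun hab i
  have := Fintype.ofFinite I
  let G : Fin n → MvPolynomial (Fin n) (Polynomial ℝ) := fun i =>
    X i ^ d + C Polynomial.X * map Polynomial.C (h i)
  have hG : ∀ s : ℝ, (fun i => map (Polynomial.evalRingHom s) (G i)) = fun i => X i ^ d + C s * h i := by
    intro s
    funext i
    simp [G, map_map]
    left
    have : (Polynomial.evalRingHom s).comp Polynomial.C = RingHom.id ℝ := by ext; simp
    rw [this, map_id]
  let P : Matrix I I (Polynomial ℝ) := fun c c' => coeff c.1 (bwTm d G c'.1)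
  have hP : ∀ (s : ℝ) c c', (P c c').eval s = coeff c.1 (bwTm d (fun i => X i ^ d + C s * h i) c'.1) := by
    intro s c c'
    rw [← hG, ← bwTm_map, coeff_map]
    rfl
  have hdet : ∀ s : ℝ, P.det.eval s = Matrix.det (fun c c' : I => coeff c.1 (bwTm d (fun i => X i ^ d + C s * h i) c'.1)) := by
    intro s
    have := RingHom.map_det (Polynomial.evalRingHom s) P
    rw [Polynomial.coe_evalRingHom] at this
    rw [this]
    congr 1
    ext c c'
    exact hP s c c'
  have h0 : P.det ≠ 0 := by
    intro h0
    have h1 := hdet 0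
    rw [h0] at h1
    have h2 : (fun c c' : I => coeff c.1 (bwTm d (fun i => X i ^ d + C (0:ℝ) * h i) c'.1)) = (1 : Matrix I I ℝ) := by
      funext c c'
      simp only [C_0, zero_mul, add_zero]
      rw [bwTm_zero, coeff_monomial, Matrix.one_apply]
      by_cases hcc : c = c'
      · simp [hcc]
      · rw [if_neg hcc, if_neg (fun h => hcc (Subtype.ext h.symm))]
    rw [h2] at h1
    simp at h1
  refine (P.det.rootSet_finite ℝ).subset ?_
  intro s hs
  rw [Polynomial.mem_rootSet]
  refine ⟨h0, ?_⟩
  by_contra hne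
  apply hs
  rw [Polynomial.coe_aeval_eq_eval, hdet] at hne
  set A : Matrix I I ℝ := fun c c' : I => coeff c.1 (bwTm d (fun i => X i ^ d + C s * h i) c'.1) with hA
  have hdeg : ∀ i, (X i ^ d + C s * h i).totalDegree ≤ d := by
    intro i
    refine (totalDegree_add _ _).trans (max_le ?_ ?_)
    · rw [totalDegree_X_pow]
    · refine (totalDegree_mul _ _).trans ?_
      simpa using hh i
  intro p hp
  let v : I → ℝ := A⁻¹.mulVec (fun c => coeff c.1 p)
  have hv : A.mulVec v = fun c => coeff c.1 p := by
    simp only [v, Matrix.mulVec_mulVec]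
    rw [Matrix.mul_nonsing_inv _ (isUnit_iff_ne_zero.mpr hne), Matrix.one_mulVec]
  have hq : (∑ c : I, monomial c.1 (v c)).totalDegree ≤ e := by
    refine totalDegree_finsetSum_le fun c _ => ?_
    refine (totalDegree_monomial_le _ _).trans ?_
    rw [Finsupp.sum_fintype _ _ (by simp)]
    exact c.2
  refine ⟨∑ c : I, monomial c.1 (v c), hq, ?_⟩
  ext c
  by_cases hc : ∑ i, c i ≤ e
  · have := congrFun hv ⟨c, hc⟩
    simp only at this
    rw [← this, map_sum, coeff_sum]
    simp only [Matrix.mulVec, dotProduct, bwT_monomial, coeff_smul, smul_eq_mul, hA]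
    exact Finset.sum_congr rfl fun _ _ => mul_comm _ _
  · have aux : ∀ r : MvPolynomial (Fin n) ℝ, r.totalDegree ≤ e → coeff c r = 0 := by
      intro r hr
      by_contra hcr
      exact hc (bw_le_of_mem hr (mem_support_iff.mpr hcr))
    rw [aux p hp, aux _ (bwT_degree d _ hdeg _ e hq)]

theorem bw_surj_all {n : ℕ} (d : ℕ) (hd : 0 < d) (g : Fin n → MvPolynomial (Fin n) ℝ)
    (hg : ∀ i, (g i).totalDegree ≤ d) (hs : ∀ e ≤ n * d + 1, bwSurj d g e) : ∀ e, bwSurj d g e := by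
  classical
  intro e
  induction e using Nat.strong_induction_on with
  | _ e ih =>
  by_cases he : e ≤ n * d + 1
  · exact hs e he
  push Not at he
  -- the submodule of good elements
  let W : Submodule ℝ (MvPolynomial (Fin n) ℝ) := (restrictTotalDegree (Fin n) ℝ e).map (bwT d g)
  have hW : ∀ p, p ∈ W ↔ ∃ q, q.totalDegree ≤ e ∧ bwT d g q = p := by
    intro p
    simp only [W, Submodule.mem_map, mem_restrictTotalDegree]
  have hlow : ∀ p : MvPolynomial (Fin n) ℝ, p.totalDegree < e → p ∈ W := by
    intro p hp
    obtain ⟨q, hq, hqp⟩ := ih _ hp p le_rfl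
    exact (hW p).2 ⟨q, by omega, hqp⟩
  have key : ∀ c' c'' : Fin n →₀ ℕ, ∑ i, c'' i = n * d + 1 → (∑ i, c' i) + (n * d + 1) = e →
      monomial c' (1:ℝ) * monomial c'' 1 ∈ W := by
    intro c' c'' hc'' hc'
    have hdc' : (monomial c' (1:ℝ)).totalDegree = ∑ i, c' i := by
      rw [totalDegree_monomial _ one_ne_zero, Finsupp.sum_fintype _ _ (by simp)]
    obtain ⟨q, hq, hqc⟩ := hs (n * d + 1) le_rfl (monomial c'' (1:ℝ)) (by
      rw [totalDegree_monomial _ one_ne_zero, Finsupp.sum_fintype _ _ (by simp), hc''])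
    rw [← hqc, bwT_eq_sum, Finset.mul_sum]
    refine Submodule.sum_mem _ fun b hb => ?_
    rw [mul_smul_comm]
    refine Submodule.smul_mem _ _ ?_
    have hbd := bw_le_of_mem hq hb
    by_cases hb' : ∑ i, b i < n * d + 1
    · apply hlow
      refine (totalDegree_mul _ _).trans_lt ?_
      have := bwTm_degree d g hg b
      omega
    · have hex : ∃ i, d ≤ b i := by
        by_contra hno
        push Not at hno
        have : ∑ i, b i ≤ ∑ i : Fin n, d := Finset.sum_le_sum fun i _ => (hno i).le
        simp at this
        omega
      obtain ⟨i, hi⟩ := hex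
      have hbi : b = (b - Finsupp.single i d) + Finsupp.single i d := by
        rw [tsub_add_cancel_of_le]
        rwa [Finsupp.single_le_iff]
      have hsum : ∑ j, b j = ∑ j, (b - Finsupp.single i d) j + d := by
        conv_lhs => rw [hbi]
        simp only [Finsupp.add_apply, Finset.sum_add_distrib]
        congr 1
        simp [Finsupp.single_apply]
      rw [hbi, bwTm_add d hd]
      have hdeg : (monomial c' (1:ℝ) * bwTm d g (b - Finsupp.single i d)).totalDegree ≤ e - d := by
        refine (totalDegree_mul _ _).trans ?_
        have := bwTm_degree d g hg (b - Finsupp.single i d)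
        omega
      obtain ⟨r, hr, hrp⟩ := ih (e - d) (by omega) _ hdeg
      rw [hW]
      refine ⟨X i ^ d * r, ?_, ?_⟩
      · refine (totalDegree_mul _ _).trans ?_
        rw [totalDegree_X_pow]
        omega
      · rw [bwT_mul d hd, hrp]
        ring
  intro p hp
  rw [← hW, p.as_sum]
  refine Submodule.sum_mem _ fun c hc => ?_
  have hce := bw_le_of_mem hp hc
  by_cases hce' : ∑ i, c i < e
  · apply hlow
    refine (totalDegree_monomial_le _ _).trans_lt ?_
    rwa [Finsupp.sum_fintype _ _ (by simp)]
  -- split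
  have hsplit : ∀ N, N ≤ ∑ i, c i → ∃ c'' : Fin n →₀ ℕ, c'' ≤ c ∧ ∑ i, c'' i = N := by
    intro N
    induction N with
    | zero => intro _; exact ⟨0, zero_le, by simp⟩
    | succ N ihN =>
      intro hN
      obtain ⟨c'', h1, h2⟩ := ihN (by omega)
      have : ∃ i, c'' i < c i := by
        by_contra hno
        push Not at hno
        have := Finset.sum_le_sum (s := Finset.univ) fun i _ => hno i
        omega
      obtain ⟨i, hi⟩ := this
      refine ⟨c'' + Finsupp.single i 1, ?_, ?_⟩
      · intro j
        have := h1 j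
        by_cases hij : i = j
        · subst hij; simp; omega
        · simp [hij, this]
      · simp only [Finsupp.add_apply, Finset.sum_add_distrib, h2]
        simp [Finsupp.single_apply]
  obtain ⟨c'', h1, h2⟩ := hsplit (n * d + 1) (by omega)
  have hcc : c = (c - c'') + c'' := (tsub_add_cancel_of_le h1).symm
  have hsum : ∑ i, c i = ∑ i, (c - c'') i + ∑ i, c'' i := by
    conv_lhs => rw [hcc]
    simp only [Finsupp.add_apply, Finset.sum_add_distrib]
  have := key (c - c'') c'' h2 (by omega)
  rw [monomial_mul, ← hcc, one_mul] at this
  have h3 : monomial c (coeff c p) = coeff c p • monomial c (1:ℝ) := by simp [smul_monomial]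
  rw [h3]
  exact Submodule.smul_mem _ _ this

theorem bwT_bij {n : ℕ} (d : ℕ) (g : Fin n → MvPolynomial (Fin n) ℝ)
    (hg : ∀ i, (g i).totalDegree ≤ d) (hs : ∀ e, bwSurj d g e) : Function.Bijective (bwT d g) := by
  constructor
  · rw [injective_iff_map_eq_zero]
    intro p hp
    set e := p.totalDegree
    have hmaps : ∀ q ∈ restrictTotalDegree (Fin n) ℝ e, bwT d g q ∈ restrictTotalDegree (Fin n) ℝ e := by
      intro q hq
      rw [mem_restrictTotalDegree] at *
      exact bwT_degree d g hg q e hq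
    have hsurj : Function.Surjective ((bwT d g).restrict hmaps) := by
      rintro ⟨q, hq⟩
      rw [mem_restrictTotalDegree] at hq
      obtain ⟨r, hr, hrq⟩ := hs e q hq
      exact ⟨⟨r, (mem_restrictTotalDegree _ _ _).2 hr⟩, Subtype.ext hrq⟩
    have hinj := LinearMap.injective_iff_surjective.2 hsurj
    have := @hinj ⟨p, (mem_restrictTotalDegree _ _ _).2 le_rfl⟩ 0 (by
      apply Subtype.ext
      simpa using hp)
    simpa using this
  · intro p
    obtain ⟨q, _, hq⟩ := hs _ p le_rfl
    exact ⟨q, hq⟩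

theorem bw_finrank {n : ℕ} (d : ℕ) (hd : 0 < d) (g : Fin n → MvPolynomial (Fin n) ℝ)
    (hb : Function.Bijective (bwT d g)) :
    Module.finrank ℝ (MvPolynomial (Fin n) ℝ ⧸ Ideal.span (Set.range g)) = d ^ n := by
  classical
  let sV : Set (Fin n →₀ ℕ) := {c | ∀ i, c i < d}
  let V := restrictSupport (R := ℝ) sV
  let I := (Ideal.span (Set.range g)).restrictScalars ℝ
  let W := restrictSupport (R := ℝ) sVᶜ
  have hTV : ∀ p ∈ V, bwT d g p = p := by
    intro p hp
    rw [bwT_eq_sum]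
    conv_rhs => rw [p.as_sum]
    refine Finset.sum_congr rfl fun c hc => ?_
    have hc' : ∀ i, c i < d := (mem_restrictSupport_iff ℝ).1 hp hc
    have : bwTm d g c = monomial c 1 := by
      rw [monomial_eq, C_1, one_mul, Finsupp.prod_fintype _ _ (by simp)]
      refine Finset.prod_congr rfl fun i _ => ?_
      rw [Nat.mod_eq_of_lt (hc' i), Nat.div_eq_of_lt (hc' i), pow_zero, mul_one]
    rw [this, smul_monomial, smul_eq_mul, mul_one]
  have hWI : ∀ p ∈ W, bwT d g p ∈ I := by
    intro p hp
    rw [bwT_eq_sum]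
    refine Submodule.sum_mem _ fun c hc => Submodule.smul_mem _ _ ?_
    have hc' : c ∈ sVᶜ := (mem_restrictSupport_iff ℝ).1 hp hc
    simp only [sV, Set.mem_compl_iff, Set.mem_ofPred_eq, not_forall, not_lt] at hc'
    obtain ⟨i, hi⟩ := hc'
    have hbi : c = (c - Finsupp.single i d) + Finsupp.single i d := by
      rw [tsub_add_cancel_of_le]
      rwa [Finsupp.single_le_iff]
    rw [hbi, bwTm_add d hd]
    exact Ideal.mul_mem_right _ _ (Ideal.subset_span ⟨i, rfl⟩)
  have hIW : ∀ p ∈ I, ∃ q ∈ W, bwT d g q = p := by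
    intro p hp
    change p ∈ Ideal.span (Set.range g) at hp
    induction hp using Submodule.span_induction with
    | mem x hx =>
      obtain ⟨i, rfl⟩ := hx
      obtain ⟨q, hq⟩ := hb.2 1
      refine ⟨X i ^ d * q, ?_, by rw [bwT_mul d hd, hq, mul_one]⟩
      have : monomial (0 : Fin n →₀ ℕ) (1:ℝ) = 1 := rfl
      have h2 : bwT d g 1 = 1 := hTV 1 (by
        rw [← this]; exact (monomial_mem_restrictSupport ℝ).2 (Or.inl fun i => by simpa using hd))
      have : q = 1 := hb.1 (hq.trans h2.symm)
      rw [this, mul_one, X_pow_eq_monomial]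
      refine (monomial_mem_restrictSupport ℝ).2 (Or.inl ?_)
      intro h
      have := h i
      simp at this
    | zero => exact ⟨0, Submodule.zero_mem _, map_zero _⟩
    | add x y _ _ hx hy =>
      obtain ⟨a, ha, rfl⟩ := hx
      obtain ⟨b, hb, rfl⟩ := hy
      exact ⟨a + b, Submodule.add_mem _ ha hb, map_add _ _ _⟩
    | smul a x hx' hx => 
      refine Submodule.span_induction (p := fun x _ => ∀ a : MvPolynomial (Fin n) ℝ, ∃ q ∈ W, bwT d g q = a • x) ?_ ?_ ?_ ?_ hx' a
      · rintro _ ⟨i, rfl⟩ a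
        obtain ⟨q, rfl⟩ := hb.2 a
        refine ⟨X i ^ d * q, ?_, by rw [bwT_mul d hd, smul_eq_mul, mul_comm]⟩
        refine (mem_restrictSupport_iff ℝ).2 ?_
        intro c hc h
        rw [Finset.mem_coe, mem_support_iff, X_pow_eq_monomial, coeff_monomial_mul'] at hc
        have hci := h i
        apply hc
        rw [if_neg]
        rw [Finsupp.single_le_iff]
        omega
      · intro a; exact ⟨0, Submodule.zero_mem _, by simp⟩
      · intro x y _ _ hx hy a
        obtain ⟨q, hq, h1⟩ := hx a
        obtain ⟨r, hr, h2⟩ := hy a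
        exact ⟨q + r, Submodule.add_mem _ hq hr, by rw [map_add, h1, h2, smul_add]⟩
      · intro b x _ hx a
        obtain ⟨q, hq, h1⟩ := hx (a * b)
        exact ⟨q, hq, by rw [h1, mul_smul]⟩
  have hcompl : IsCompl I V := by
    constructor
    · rw [Submodule.disjoint_def]
      intro p hpI hpV
      obtain ⟨q, hq, hqp⟩ := hIW p hpI
      have : q = p := hb.1 (hqp.trans (hTV p hpV).symm)
      subst this
      rw [← support_eq_empty, Finset.eq_empty_iff_forall_notMem]
      intro c hc
      exact ((mem_restrictSupport_iff ℝ).1 hq hc) ((mem_restrictSupport_iff ℝ).1 hpV hc)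
    · rw [codisjoint_iff, eq_top_iff]
      intro p _
      obtain ⟨q, rfl⟩ := hb.2 p
      rw [bwT_eq_sum]
      refine Submodule.sum_mem _ fun c hc => Submodule.smul_mem _ _ ?_
      have h1 : bwTm d g c = bwT d g (monomial c 1) := by rw [bwT_monomial, one_smul]
      rw [h1]
      by_cases hcs : c ∈ sV
      · refine Submodule.mem_sup_right ?_
        have : monomial c (1:ℝ) ∈ V := (monomial_mem_restrictSupport ℝ).2 (Or.inl hcs)
        rwa [hTV _ this]
      · refine Submodule.mem_sup_left (hWI _ ((monomial_mem_restrictSupport ℝ).2 (Or.inl hcs)))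
  have e1 := (Submodule.quotientEquivOfIsCompl I V hcompl).finrank_eq
  have e2 : Module.finrank ℝ V = Nat.card sV := Module.finrank_eq_nat_card_basis (basisRestrictSupport ℝ sV)
  have e3 : Nat.card sV = d ^ n := by
    have : sV ≃ (Fin n → Fin d) :=
      { toFun := fun c i => ⟨c.1 i, c.2 i⟩
        invFun := fun f => ⟨Finsupp.equivFunOnFinite.symm fun i => (f i : ℕ), fun i => by simp⟩
        left_inv := fun c => by ext; simp
        right_inv := fun f => by ext; simp }
    rw [Nat.card_congr this]
    simp
  rw [← e3, ← e2, ← e1]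
  exact ((Submodule.Quotient.restrictScalarsEquiv ℝ (Ideal.span (Set.range g))).finrank_eq).symm

/-- odd-dimensional real commutative algebras have a real point -/
theorem bw_real_point (A : Type) [CommRing A] [Algebra ℝ A] (hodd : Odd (Module.finrank ℝ A)) :
    Nonempty (A →ₐ[ℝ] ℝ) := by
  have hfin : Module.Finite ℝ A := Module.finite_of_finrank_pos hodd.pos
  have key : ∀ N : ℕ, ∀ (V : Type) [AddCommGroup V] [Module ℝ V] [Module A V] [IsScalarTower ℝ A V]
      [Module.Finite ℝ V], Module.finrank ℝ V = N → Odd N → Nonempty (A →ₐ[ℝ] ℝ) := by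
    intro N
    induction N using Nat.strong_induction_on with
    | _ N ih =>
    intro V _ _ _ _ _ hN hoddN
    have hVn : Nontrivial V := Module.nontrivial_of_finrank_pos (R := ℝ) (by rw [hN]; exact hoddN.pos)
    by_cases hsimple : ∀ U : Submodule A V, U = ⊥ ∨ U = ⊤
    · have hs : IsSimpleModule A V := (isSimpleModule_iff A V).2 { eq_bot_or_eq_top := hsimple }
      obtain ⟨I, hI, ⟨e⟩⟩ := isSimpleModule_iff_quot_maximal.1 hs
      let _ := Ideal.Quotient.field I
      have hf : Module.finrank ℝ (A ⧸ I) = N := by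
        rw [← hN]; exact ((e.restrictScalars ℝ).finrank_eq).symm
      have hfin' : Module.Finite ℝ (A ⧸ I) := Module.finite_of_finrank_pos (by rw [hf]; exact hoddN.pos)
      rcases Real.nonempty_algEquiv_or (A ⧸ I) with ⟨⟨φ⟩⟩ | ⟨⟨φ⟩⟩
      · exact ⟨(φ : (A ⧸ I) →ₐ[ℝ] ℝ).comp (Ideal.Quotient.mkₐ ℝ I)⟩
      · have := φ.toLinearEquiv.finrank_eq
        rw [hf, Complex.finrank_real_complex] at this
        subst this
        exact absurd hoddN (by decide)
    · push Not at hsimple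
      obtain ⟨U, hU1, hU2⟩ := hsimple
      let U' := U.restrictScalars ℝ
      have hadd : Module.finrank ℝ (V ⧸ U') + Module.finrank ℝ U' = Module.finrank ℝ V :=
        Submodule.finrank_quotient_add_finrank U'
      have hU'1 : U' ≠ ⊥ := by simpa [U'] using hU1
      have hU'2 : U' ≠ ⊤ := by simpa [U'] using hU2
      have hlt : Module.finrank ℝ U' < Module.finrank ℝ V := Submodule.finrank_lt hU'2
      have hpos : 0 < Module.finrank ℝ U' := by
        rw [Module.finrank_pos_iff]
        exact Submodule.nontrivial_iff_ne_bot.2 hU'1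
      rcases Nat.even_or_odd (Module.finrank ℝ U') with hev | hod
      · have ho : Odd (Module.finrank ℝ (V ⧸ U')) := by
          rw [hN.symm, ← hadd] at hoddN
          exact (Nat.odd_add.1 hoddN).2 hev
        have hq := (Submodule.Quotient.restrictScalarsEquiv ℝ U).finrank_eq
        have : Module.Finite ℝ (V ⧸ U) := Module.Finite.equiv (Submodule.Quotient.restrictScalarsEquiv ℝ U)
        refine ih (Module.finrank ℝ (V ⧸ U')) (by omega) (V ⧸ U) hq.symm ho
      · have : Module.Finite ℝ U := inferInstanceAs (Module.Finite ℝ U')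
        have : IsScalarTower ℝ A U := ⟨fun r a u => Subtype.ext (smul_assoc r a (u : V))⟩
        exact @ih (Module.finrank ℝ U') (by omega) U _ _ _ this inferInstance rfl hod
  exact key _ A rfl hodd

theorem bw_zero {n : ℕ} (d : ℕ) (hd : Odd d) (h : Fin n → MvPolynomial (Fin n) ℝ)
    (hh : ∀ i, (h i).totalDegree ≤ d) (S : ℝ) :
    ∃ s, S < s ∧ ∃ x : Fin n → ℝ, ∀ i, x i ^ d + s * eval x (h i) = 0 := by
  have hfin : (⋃ e ∈ Set.Iic (n * d + 1), {s : ℝ | ¬ bwSurj d (fun i => X i ^ d + C s * h i) e}).Finite :=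
    (Set.finite_Iic _).biUnion fun e _ => bw_generic d h hh e
  obtain ⟨s, hsS, hs⟩ := (Set.Ioi_infinite S).exists_notMem_finite hfin
  refine ⟨s, hsS, ?_⟩
  simp only [Set.mem_Iic, Set.mem_iUnion, Set.mem_ofPred_eq, exists_prop, not_exists, not_and, not_not] at hs
  have hdeg : ∀ i, (X i ^ d + C s * h i).totalDegree ≤ d := by
    intro i
    refine (totalDegree_add _ _).trans (max_le ?_ ?_)
    · rw [totalDegree_X_pow]
    · refine (totalDegree_mul _ _).trans ?_
      simpa using hh i
  have hb := bwT_bij d _ hdeg (bw_surj_all d hd.pos _ hdeg hs)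
  have hr := bw_finrank d hd.pos _ hb
  obtain ⟨φ⟩ := bw_real_point _ (hr ▸ hd.pow)
  let ψ := φ.comp (Ideal.Quotient.mkₐ ℝ (Ideal.span (Set.range fun i => X i ^ d + C s * h i)))
  refine ⟨fun i => ψ (X i), fun i => ?_⟩
  have h1 : ψ (X i ^ d + C s * h i) = 0 := by
    change φ (Ideal.Quotient.mk _ _) = 0
    rw [Ideal.Quotient.eq_zero_iff_mem.2, map_zero]
    exact Ideal.subset_span ⟨i, rfl⟩
  have h2 : ∀ p, ψ p = eval (fun i => ψ (X i)) p := by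
    intro p
    have : ψ = aeval (fun i => ψ (X i)) := by ext; simp
    conv_lhs => rw [this]
    simp [aeval_eq_eval]
  rw [h2] at h1
  simpa using h1

def bwK (n : ℕ) : Set (Fin n → ℝ) := {u | ∑ i, u i ^ 2 = 1}

theorem bwK_compact (n : ℕ) : IsCompact (bwK n) := by
  refine Metric.isCompact_of_isClosed_isBounded ?_ ?_
  · exact isClosed_eq (by fun_prop) continuous_const
  · refine (Metric.isBounded_closedBall (x := (0 : Fin n → ℝ)) (r := 1)).subset ?_
    intro u hu
    rw [mem_closedBall_zero_iff, pi_norm_le_iff_of_nonneg zero_le_one]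
    intro i
    have h1 : u i ^ 2 ≤ ∑ j, u j ^ 2 :=
      Finset.single_le_sum (f := fun j => u j ^ 2) (fun _ _ => sq_nonneg _) (Finset.mem_univ i)
    have hu' : ∑ j, u j ^ 2 = 1 := hu
    rw [hu'] at h1
    rw [Real.norm_eq_abs]
    exact abs_le_one_iff_mul_self_le_one.2 (by nlinarith)

noncomputable def bwR {n : ℕ} (x : Fin n → ℝ) : ℝ := Real.sqrt (1 + ∑ i, x i ^ 2)

theorem bwR_sq {n : ℕ} (x : Fin n → ℝ) : bwR x ^ 2 = 1 + ∑ i, x i ^ 2 :=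
  Real.sq_sqrt (add_nonneg zero_le_one (Finset.sum_nonneg fun _ _ => sq_nonneg _))

theorem bwR_pos {n : ℕ} (x : Fin n → ℝ) : 0 < bwR x :=
  Real.sqrt_pos.2 (add_pos_of_pos_of_nonneg zero_lt_one (Finset.sum_nonneg fun _ _ => sq_nonneg _))

noncomputable def bwU {n : ℕ} (x : Fin n → ℝ) : Fin (n+1) → ℝ :=
  fun j => (Fin.cons 1 x : Fin (n+1) → ℝ) j / bwR x

theorem bwU_mem {n : ℕ} (x : Fin n → ℝ) : bwU x ∈ bwK (n+1) := by
  change ∑ i, bwU x i ^ 2 = 1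
  simp only [bwU, div_pow, ← Finset.sum_div]
  rw [bwR_sq, Fin.sum_univ_succ]
  simp only [Fin.cons_zero, Fin.cons_succ, one_pow]
  exact div_self (bwR_sq x ▸ (pow_pos (bwR_pos x) 2).ne')

theorem bw_rep {n : ℕ} (p : MvPolynomial (Fin (n+1)) ℝ) :
    ∃ N : ℕ, ∀ d ≥ N, ∃ h : MvPolynomial (Fin n) ℝ, h.totalDegree ≤ d ∧
      ∀ x, eval x h = bwR x ^ d * ((eval (bwU x) p + (-1) ^ d * eval (-bwU x) p) / 2) := by
  induction p using MvPolynomial.induction_on with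
  | C a =>
    refine ⟨0, fun d _ => ?_⟩
    rcases Nat.even_or_odd d with hd | hd
    · obtain ⟨m, rfl⟩ := hd
      refine ⟨C a * (1 + ∑ i, X i ^ 2) ^ m, ?_, fun x => ?_⟩
      · refine (totalDegree_mul _ _).trans ?_
        rw [totalDegree_C, zero_add]
        refine (totalDegree_pow _ _).trans ?_
        have : (1 + ∑ i, X i ^ 2 : MvPolynomial (Fin n) ℝ).totalDegree ≤ 2 := by
          refine (totalDegree_add _ _).trans (max_le (by simp) ?_)
          exact totalDegree_finsetSum_le fun i _ => by rw [totalDegree_X_pow]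
        nlinarith
      · have : bwR x ^ (m + m) = (1 + ∑ i, x i ^ 2) ^ m := by
          rw [← bwR_sq, ← pow_mul]; ring
        have h1 : (-1 : ℝ) ^ (m + m) = 1 := Even.neg_one_pow ⟨m, rfl⟩
        rw [this, h1]
        simp
        ring
    · refine ⟨0, by simp, fun x => ?_⟩
      rw [hd.neg_one_pow]
      simp
  | add p q hp hq =>
    obtain ⟨N, hN⟩ := hp
    obtain ⟨M, hM⟩ := hq
    refine ⟨max N M, fun d hd => ?_⟩
    obtain ⟨h1, h1d, h1e⟩ := hN d (le_trans (le_max_left _ _) hd)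
    obtain ⟨h2, h2d, h2e⟩ := hM d (le_trans (le_max_right _ _) hd)
    refine ⟨h1 + h2, (totalDegree_add _ _).trans (max_le h1d h2d), fun x => ?_⟩
    rw [map_add, h1e, h2e, map_add, map_add]
    ring
  | mul_X p j hp =>
    obtain ⟨N, hN⟩ := hp
    refine ⟨N + 1, fun d hd => ?_⟩
    obtain ⟨d, rfl⟩ : ∃ d', d = d' + 1 := ⟨d - 1, by omega⟩
    obtain ⟨h, hdeg, he⟩ := hN d (by omega)
    refine ⟨h * (Fin.cons 1 X : Fin (n+1) → MvPolynomial (Fin n) ℝ) j, ?_, fun x => ?_⟩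
    · refine (totalDegree_mul _ _).trans (add_le_add hdeg ?_)
      refine Fin.cases ?_ (fun i => ?_) j
      · simp
      · simp
    · have h1 : eval x ((Fin.cons 1 X : Fin (n+1) → MvPolynomial (Fin n) ℝ) j) = bwR x * bwU x j := by
        rw [bwU, mul_div_cancel₀ _ (bwR_pos x).ne']
        refine Fin.cases ?_ (fun i => ?_) j
        · simp
        · simp
      rw [map_mul, he, h1]
      simp only [map_mul, eval_X, Pi.neg_apply]
      ring

theorem bw_approx {n : ℕ} (f : (Fin n → ℝ) → ℝ) (hf : ContinuousOn f (bwK n)) (ε : ℝ) (hε : 0 < ε) :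
    ∃ p : MvPolynomial (Fin n) ℝ, ∀ u ∈ bwK n, |eval u p - f u| < ε := by
  have : CompactSpace (bwK n) := isCompact_iff_compactSpace.1 (bwK_compact n)
  let co : Fin n → C(bwK n, ℝ) := fun i => ⟨fun u => u.1 i, (continuous_apply i).comp continuous_subtype_val⟩
  let Φ : MvPolynomial (Fin n) ℝ →ₐ[ℝ] C(bwK n, ℝ) := aeval co
  have hΦ : ∀ p (u : bwK n), Φ p u = eval u.1 p := by
    intro p u
    induction p using MvPolynomial.induction_on with
    | C a => simp [Φ]
    | add p q hp hq => rw [map_add, map_add, ContinuousMap.add_apply, hp, hq]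
    | mul_X p i hp => rw [map_mul, map_mul, ContinuousMap.mul_apply, hp]; simp [Φ, co]
  have hsep : Φ.range.SeparatesPoints := by
    intro u v huv
    have : ∃ i, u.1 i ≠ v.1 i := by
      by_contra hno
      push Not at hno
      exact huv (Subtype.ext (funext hno))
    obtain ⟨i, hi⟩ := this
    refine ⟨Φ (X i), ⟨Φ (X i), ⟨X i, rfl⟩, rfl⟩, ?_⟩
    rw [hΦ, hΦ]
    simpa using hi
  obtain ⟨⟨g, p, rfl⟩, hg⟩ := ContinuousMap.exists_mem_subalgebra_near_continuous_of_separatesPoints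
    Φ.range hsep (fun u : bwK n => f u.1) (continuousOn_iff_continuous_domRestrict.1 hf) ε hε
  refine ⟨p, fun u hu => ?_⟩
  have := hg ⟨u, hu⟩
  rw [Real.norm_eq_abs] at this
  have h2 := hΦ p ⟨u, hu⟩
  rw [← h2]
  exact this

theorem bw_borsuk_ulam {n : ℕ} (f : Fin n → (Fin (n+1) → ℝ) → ℝ)
    (hc : ∀ i, ContinuousOn (f i) (bwK (n+1)))
    (hodd : ∀ i, ∀ u ∈ bwK (n+1), f i (-u) = - f i u) : ∃ u ∈ bwK (n+1), ∀ i, f i u = 0 := by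
  by_contra hno
  push Not at hno
  have hneK : (bwK (n+1)).Nonempty := ⟨_, bwU_mem (0 : Fin n → ℝ)⟩
  obtain ⟨u₀, hu₀, hmin⟩ := (bwK_compact (n+1)).exists_isMinOn hneK
    (f := fun u => ∑ i, |f i u|) (continuousOn_finsetSum _ fun i _ => (hc i).abs)
  set m := ∑ i, |f i u₀| with hm
  have hmpos : 0 < m := by
    obtain ⟨i, hi⟩ := hno u₀ hu₀
    exact Finset.sum_pos' (fun _ _ => abs_nonneg _) ⟨i, Finset.mem_univ i, abs_pos.2 hi⟩
  have hmle : ∀ u ∈ bwK (n+1), m ≤ ∑ i, |f i u| := fun u hu => hmin hu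
  set δ := m / (n + 1) with hδ
  have hδpos : 0 < δ := by positivity
  choose p hp using fun i => bw_approx (f i) (hc i) (δ/2) (by positivity)
  choose N hN using fun i => bw_rep (p i)
  let d := 2 * (∑ i, N i) + 1
  have hd : Odd d := ⟨_, rfl⟩
  have hdN : ∀ i, d ≥ N i := by
    intro i
    have := Finset.single_le_sum (f := N) (fun _ _ => Nat.zero_le _) (Finset.mem_univ i)
    omega
  choose h hdeg he using fun i => hN i d (hdN i)
  obtain ⟨s, hs, x, hx⟩ := bw_zero d hd h hdeg (2 / δ)
  have hspos : 0 < s := lt_trans (by positivity) hs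
  have hu := bwU_mem x
  have hnu : -bwU x ∈ bwK (n+1) := by
    change ∑ i, (-bwU x) i ^ 2 = 1
    simpa [bwK] using hu
  have key : ∀ i, |f i (bwU x)| ≤ δ := by
    intro i
    have h1 := hx i
    rw [he i x, hd.neg_one_pow] at h1
    set ψ := (eval (bwU x) (p i) + -1 * eval (-bwU x) (p i)) / 2 with hψ
    have hxi : x i = bwR x * bwU x i.succ := by
      rw [bwU, mul_div_cancel₀ _ (bwR_pos x).ne', Fin.cons_succ]
    rw [hxi, mul_pow] at h1
    have h2 : bwU x i.succ ^ d + s * ψ = 0 := by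
      have h3 : bwR x ^ d * (bwU x i.succ ^ d + s * ψ) = 0 := by linarith
      exact (mul_eq_zero.1 h3).resolve_left (pow_pos (bwR_pos x) d).ne'
    have h4 : |bwU x i.succ| ≤ 1 := by
      have h1 : bwU x i.succ ^ 2 ≤ ∑ j, bwU x j ^ 2 :=
        Finset.single_le_sum (f := fun j => bwU x j ^ 2) (fun _ _ => sq_nonneg _) (Finset.mem_univ i.succ)
      have hu' : ∑ j, bwU x j ^ 2 = 1 := hu
      rw [hu'] at h1
      exact abs_le_one_iff_mul_self_le_one.2 (by nlinarith)
    have h5 : s * |ψ| ≤ 1 := by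
      have : s * ψ = -(bwU x i.succ ^ d) := by linarith
      rw [← abs_of_pos hspos, ← abs_mul, this, abs_neg, abs_pow]
      exact pow_le_one₀ (abs_nonneg _) h4
    have h6 : |ψ| ≤ δ / 2 := by
      rw [div_lt_iff₀ hδpos] at hs
      by_contra hcon
      push Not at hcon
      nlinarith
    have h7 := abs_lt.1 (hp i _ hu)
    have h8 := abs_lt.1 (hp i _ hnu)
    rw [hodd i _ hu] at h8
    have h9 := abs_le.1 h6
    rw [abs_le]
    constructor <;> linarith [h7.1, h7.2, h8.1, h8.2, h9.1, h9.2]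
  have h10 := hmle _ hu
  have h11 : ∑ i, |f i (bwU x)| ≤ ∑ _i : Fin n, δ := Finset.sum_le_sum fun i _ => key i
  simp only [Finset.sum_const, Finset.card_univ, Fintype.card_fin, nsmul_eq_mul] at h11
  have h12 : δ * (n + 1) = m := by
    rw [hδ]; field_simp
  nlinarith

end

/-- Borsuk–Ulam-type lemma (Sévennec): if the unit sphere of a finite-dimensional real
normed space is covered by `k` antipodally invariant sets, each of which splits as a
relatively clopen set together with its antipodal image, then the dimension is at most `k`. -/
theorem stmt_0 (E : Type*) [NormedAddCommGroup E] [NormedSpace ℝ E] [FiniteDimensional ℝ E]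
    (k : ℕ) (C A : Fin k → Set E)
    (hC_sub : ∀ i, C i ⊆ {v : E | ‖v‖ = 1})
    (hcover : {v : E | ‖v‖ = 1} ⊆ ⋃ i, C i)
    (hinv : ∀ i, ∀ v ∈ C i, -v ∈ C i)
    (hA_sub : ∀ i, A i ⊆ C i)
    (hA_clopen : ∀ i, IsClopen {x : (C i) | (x : E) ∈ A i})
    (hA_union : ∀ i, C i = A i ∪ (Neg.neg '' A i))
    (hA_disj : ∀ i, A i ∩ (Neg.neg '' A i) = ∅) :
    Module.finrank ℝ E ≤ k := by
  by_contra hlt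
  push Not at hlt
  -- an injective linear map from ℝ^(k+1)
  obtain ⟨L, hL⟩ : ∃ L : (Fin (k+1) → ℝ) →ₗ[ℝ] E, Function.Injective L := by
    obtain ⟨v, hv⟩ := exists_linearIndependent_of_le_finrank (R := ℝ) (M := E) (n := k + 1) hlt
    exact ⟨Fintype.linearCombination ℝ v, hv.fintypeLinearCombination_injective⟩
  have hLc : Continuous L := L.continuous_of_finiteDimensional
  let B : Fin k → Set E := fun i => Neg.neg '' A i
  have hinfneg : ∀ (S : Set E) (v : E), Metric.infDist (-v) (Neg.neg '' S) = Metric.infDist v S := by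
    intro S v
    exact Metric.infDist_image (isometry_neg (G := E))
  have hBB : ∀ i, Neg.neg '' (B i) = A i := fun i => by simp [B]
  let F : Fin k → E → ℝ := fun i v => Metric.infDist v (B i) - Metric.infDist v (A i)
  have hFc : ∀ i, Continuous (F i) := fun i =>
    (Metric.continuous_infDist_pt _).sub (Metric.continuous_infDist_pt _)
  have hFodd : ∀ i v, F i (-v) = - F i v := by
    intro i v
    have h1 := hinfneg (A i) v
    have h2 := hinfneg (B i) v
    rw [hBB] at h2
    simp only [F, B] at *
    rw [h1, h2]; ring
  -- closures
  have hclA : ∀ i, ∀ v ∈ C i, v ∈ closure (A i) → v ∈ A i := by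
    intro i v hv hcl
    have hcl' := (hA_clopen i).1
    obtain ⟨Z, hZ, hZe⟩ := isClosed_induced_iff.1 hcl'
    have hsub : A i ⊆ Z := by
      intro a ha
      have : (⟨a, hA_sub i ha⟩ : C i) ∈ Subtype.val ⁻¹' Z := by rw [hZe]; exact ha
      exact this
    have hvZ : (⟨v, hv⟩ : C i) ∈ Subtype.val ⁻¹' Z := closure_minimal hsub hZ hcl
    rw [hZe] at hvZ
    exact hvZ
  have hpos : ∀ i, ∀ v ∈ A i, F i v ≠ 0 := by
    intro i v hv h0
    have hBne : (B i).Nonempty := ⟨-v, v, hv, rfl⟩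
    simp only [F] at h0
    rw [Metric.infDist_zero_of_mem hv, sub_zero] at h0
    have hmem : v ∈ closure (B i) := (Metric.mem_closure_iff_infDist_zero hBne).2 h0
    have hneg : -v ∈ closure (A i) := by
      rw [Metric.mem_closure_iff_infDist_zero ⟨v, hv⟩, ← hBB i, hinfneg, h0]
    have h1 := hclA i (-v) (hinv i v (hA_sub i hv)) hneg
    have h2 : v ∈ A i ∩ (Neg.neg '' A i) := ⟨hv, -v, h1, neg_neg v⟩
    rw [hA_disj i] at h2
    exact h2
  have hne : ∀ v : E, ‖v‖ = 1 → ∃ i, F i v ≠ 0 := by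
    intro v hv
    obtain ⟨i, hi⟩ := Set.mem_iUnion.1 (hcover hv)
    refine ⟨i, ?_⟩
    rw [hA_union i] at hi
    rcases hi with hi | ⟨w, hw, rfl⟩
    · exact hpos i v hi
    · simp only [hFodd]
      exact neg_ne_zero.2 (hpos i w hw)
  have hL0 : ∀ u ∈ bwK (k+1), L u ≠ 0 := by
    intro u hu h0
    have : u = 0 := hL (by rw [h0, map_zero])
    subst this
    simp [bwK] at hu
  obtain ⟨u, hu, huz⟩ := bw_borsuk_ulam (fun i u => F i (‖L u‖⁻¹ • L u))
    (fun i => (hFc i).comp_continuousOn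
      ((hLc.norm.continuousOn.inv₀ fun u hu => norm_ne_zero_iff.2 (hL0 u hu)).smul hLc.continuousOn))
    (fun i u _ => by simp only [map_neg, norm_neg, smul_neg, hFodd])
  obtain ⟨i, hi⟩ := hne (‖L u‖⁻¹ • L u) (by
    rw [norm_smul, norm_inv, norm_norm, inv_mul_cancel₀ (norm_ne_zero_iff.2 (hL0 u hu))])
  exact hi (huz i)
end

section
/- For every continuously differentiable function φ : ℝ² → ℝ with compact support contained in the open upper half-plane ℝ × (0, ∞), one has ∫∫ ((∂φ/∂x)(x,y)² + (∂φ/∂y)(x,y)²) dx dy ≥ (1/4) ∫∫ φ(x,y)²/y² dx dy. -/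
open MeasureTheory

theorem stmt_1 (φ : ℝ × ℝ → ℝ) (hφ : ContDiff ℝ 1 φ) (hsupp : HasCompactSupport φ)
    (hupper : tsupport φ ⊆ {p : ℝ × ℝ | 0 < p.2}) :
    (1 / 4) * ∫ p : ℝ × ℝ, φ p ^ 2 / p.2 ^ 2 ≤
      ∫ p : ℝ × ℝ, (fderiv ℝ φ p (1, 0) ^ 2 + fderiv ℝ φ p (0, 1) ^ 2) := by
  have hz : ∀ p : ℝ × ℝ, p.2 = 0 → φ =ᶠ[nhds p] 0 := by
    intro p hp
    rw [← notMem_tsupport_iff_eventuallyEq]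
    intro h
    have := hupper h
    simp [hp] at this
  obtain ⟨ψ, hψ⟩ : ∃ ψ : ℝ × ℝ → ℝ, ψ = fun p => φ p / p.2 := ⟨_, rfl⟩
  have hψz : ∀ p : ℝ × ℝ, p.2 = 0 → ψ =ᶠ[nhds p] 0 := by
    intro p hp
    filter_upwards [hz p hp] with q hq
    simp [hψ, hq]
  have hψC : ContDiff ℝ 1 ψ := by
    rw [contDiff_iff_contDiffAt]
    intro p
    by_cases hp : p.2 = 0
    · exact contDiffAt_const.congr_of_eventuallyEq (hψz p hp)
    · rw [hψ]
      exact hφ.contDiffAt.div contDiffAt_snd hp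
  have hψs : HasCompactSupport ψ := by
    refine hsupp.mono ?_
    intro p hp h
    exact hp (by simp [hψ, h])
  have hd : ∀ p, fderiv ℝ φ p (0, 1) = p.2 * fderiv ℝ ψ p (0, 1) + ψ p := by
    intro p
    have he : φ = fun q => q.2 * ψ q := by
      funext q
      by_cases hq : q.2 = 0
      · simp [hq, (hz q hq).eq_of_nhds]
      · simp only [hψ]; field_simp
    have h1 := (hasFDerivAt_snd (𝕜 := ℝ) (p := p)).mul
        ((hψC.differentiable one_ne_zero) p).hasFDerivAt
    have h2 : HasFDerivAt φ _ p := h1.congr_of_eventuallyEq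
      (Filter.Eventually.of_forall fun q => congrFun he q)
    rw [h2.fderiv]
    simp
  have hcφ : ∀ v, Continuous fun p => fderiv ℝ φ p v := fun v =>
    (hφ.continuous_fderiv one_ne_zero).clm_apply continuous_const
  have hcψ : ∀ v, Continuous fun p => fderiv ℝ ψ p v := fun v =>
    (hψC.continuous_fderiv one_ne_zero).clm_apply continuous_const
  have hsφ : ∀ v, HasCompactSupport fun p => fderiv ℝ φ p v := fun v => hsupp.fderiv_apply ℝ v
  have i1 : Integrable fun p => fderiv ℝ φ p (0, 1) * ψ p :=
    ((hcφ _).mul hψC.continuous).integrable_of_hasCompactSupport hψs.mul_left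
  have i2 : Integrable fun p => φ p * fderiv ℝ ψ p (0, 1) :=
    (hφ.continuous.mul (hcψ _)).integrable_of_hasCompactSupport hsupp.mul_right
  have i3 : Integrable fun p => φ p * ψ p :=
    (hφ.continuous.mul hψC.continuous).integrable_of_hasCompactSupport hsupp.mul_right
  have i4 : Integrable fun p => ψ p * ψ p :=
    (hψC.continuous.mul hψC.continuous).integrable_of_hasCompactSupport hψs.mul_right
  have i5 : ∀ v, Integrable fun p => fderiv ℝ φ p v * fderiv ℝ φ p v := fun v =>
    ((hcφ v).mul (hcφ v)).integrable_of_hasCompactSupport (hsφ v).mul_right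
  have ibp := integral_mul_fderiv_eq_neg_fderiv_mul_of_integrable i1 i2 i3
    (fun p _ => hφ.differentiable one_ne_zero p) (fun p _ => hψC.differentiable one_ne_zero p)
  have e1 : ∀ p, φ p * fderiv ℝ ψ p (0, 1) = fderiv ℝ φ p (0, 1) * ψ p - ψ p * ψ p := by
    intro p
    rw [hd p]
    by_cases hq : p.2 = 0
    · simp [hq, (hz p hq).eq_of_nhds]
    · simp only [hψ]; field_simp; ring
  simp_rw [e1] at ibp
  rw [integral_sub i1 i4] at ibp
  have e2 : ∀ p : ℝ × ℝ, φ p ^ 2 / p.2 ^ 2 = ψ p * ψ p := by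
    intro p
    simp only [hψ]
    ring
  simp_rw [e2]
  have key : ∫ p, (fderiv ℝ φ p (0, 1) * ψ p - 1 / 4 * (ψ p * ψ p)) ≤
      ∫ p : ℝ × ℝ, (fderiv ℝ φ p (1, 0) ^ 2 + fderiv ℝ φ p (0, 1) ^ 2) := by
    refine integral_mono (i1.sub (i4.const_mul _)) ?_ ?_
    · simp only [sq]
      exact (i5 (1, 0)).add (i5 (0, 1))
    · intro p
      simp only
      nlinarith [sq_nonneg (fderiv ℝ φ p (1, 0)), sq_nonneg (fderiv ℝ φ p (0, 1) - ψ p / 2)]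
  rw [integral_sub i1 (i4.const_mul _), integral_const_mul] at key
  linarith
end

section
/- For every continuously differentiable function φ : ℝ → ℝ with compact support contained in the open half-line (0, ∞), one has ∫₀^∞ φ'(y)² dy ≥ (1/4) ∫₀^∞ φ(y)²/y² dy. -/
open MeasureTheory

/-- One-dimensional Hardy inequality: for a C¹ function with compact support in `(0, ∞)`,
`∫₀^∞ φ'(y)² dy ≥ (1/4) ∫₀^∞ φ(y)²/y² dy`. -/
theorem stmt_3 (φ : ℝ → ℝ) (hφ : ContDiff ℝ 1 φ) (hsupp : HasCompactSupport φ)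
    (hpos : tsupport φ ⊆ Set.Ioi 0) :
    (1 / 4) * ∫ y in Set.Ioi (0 : ℝ), φ y ^ 2 / y ^ 2 ≤
      ∫ y in Set.Ioi (0 : ℝ), deriv φ y ^ 2 := by
  have h0 : (0 : ℝ) ∉ tsupport φ := fun h => lt_irrefl (0 : ℝ) (hpos h)
  obtain ⟨ψ, hψdef⟩ : ∃ ψ : ℝ → ℝ, ψ = fun y => φ y / y := ⟨_, rfl⟩
  have hψ : ContDiff ℝ 1 ψ := by
    rw [contDiff_iff_contDiffAt]
    intro y
    by_cases hy : y = 0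
    · subst hy
      have h1 : φ =ᶠ[nhds 0] 0 := notMem_tsupport_iff_eventuallyEq.mp h0
      have h2 : ψ =ᶠ[nhds 0] fun _ => (0 : ℝ) := by
        filter_upwards [h1] with z hz
        simp [hψdef, hz]
      exact contDiffAt_const.congr_of_eventuallyEq h2
    · rw [hψdef]
      exact hφ.contDiffAt.div contDiffAt_id hy
  have hψs : HasCompactSupport ψ := by
    apply hsupp.mono
    intro y hy h
    apply hy
    simp [hψdef, h]
  have hg : ContDiff ℝ 1 (fun y => φ y * ψ y) := hφ.mul hψ
  have hgs : HasCompactSupport (fun y => φ y * ψ y) := hsupp.mul_right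
  have hgi : ∫ y in Set.Ioi (0 : ℝ), deriv (fun y => φ y * ψ y) y = 0 := by
    rw [hgs.integral_Ioi_deriv_eq hg 0]
    simp [hψdef]
  have i1 : Integrable (fun y => φ y ^ 2 / y ^ 2) := by
    have : (fun y => φ y ^ 2 / y ^ 2) = fun y => ψ y * ψ y := by
      funext y; simp only [hψdef]; ring
    rw [this]
    exact (hψ.continuous.mul hψ.continuous).integrable_of_hasCompactSupport hψs.mul_right
  have i2 : Integrable (fun y => deriv φ y ^ 2) := by
    have hc := hφ.continuous_deriv le_rfl
    simp only [pow_two]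
    exact (hc.mul hc).integrable_of_hasCompactSupport hsupp.deriv.mul_right
  have i3 : Integrable (deriv (fun y => φ y * ψ y)) :=
    (hg.continuous_deriv le_rfl).integrable_of_hasCompactSupport hgs.deriv
  have key : ∫ y in Set.Ioi (0 : ℝ), ((1 / 4) * (φ y ^ 2 / y ^ 2)
      + (1 / 2) * deriv (fun y => φ y * ψ y) y) ≤ ∫ y in Set.Ioi (0 : ℝ), deriv φ y ^ 2 := by
    refine setIntegral_mono_on ((i1.const_mul _).add (i3.const_mul _)).integrableOn
      i2.integrableOn measurableSet_Ioi ?_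
    intro y hy
    have hy0 : y ≠ 0 := ne_of_gt hy
    have d := (hφ.differentiable one_ne_zero y).hasDerivAt
    have d2 : HasDerivAt ψ ((deriv φ y * y - φ y * 1) / y ^ 2) y := by
      rw [hψdef]; exact d.div (hasDerivAt_id y) hy0
    have d3 : deriv (fun y => φ y * ψ y) y = _ := (d.mul d2).deriv
    rw [d3]
    have e : deriv φ y ^ 2 - ((1 / 4) * (φ y ^ 2 / y ^ 2)
      + (1 / 2) * (deriv φ y * ψ y + φ y * ((deriv φ y * y - φ y * 1) / y ^ 2)))
      = (deriv φ y - φ y / (2 * y)) ^ 2 := by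
      simp only [hψdef]
      field_simp
      ring
    nlinarith [sq_nonneg (deriv φ y - φ y / (2 * y))]
  rw [integral_add (i1.const_mul _).integrableOn (i3.const_mul _).integrableOn,
    integral_const_mul, integral_const_mul, hgi] at key
  linarith
end

section
/- Let f : ℝ² → ℝ be real analytic on a neighborhood of a point p, not identically zero on any neighborhood of p, and with f(p) = 0. Then there exist ε > 0, a nonnegative integer r, and 2r injective continuous paths γ₁, …, γ_{2r} : [0,1] → ℝ² with γ_i(0) = p for every i, such that the images γ_i((0,1]) are pairwise disjoint, do not contain p, and the zero set of f in the open ball B(p, ε) satisfies Z(f) ∩ B(p,ε) = ({p} ∪ ⋃_{i=1}^{2r} γ_i([0,1])) ∩ B(p,ε). In particular either p is an isolated zero of f (the case r = 0) or the nodal set of f near p is a union of an even number of arcs emanating from p. -/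
namespace NodalAux
open Filter Topology Set Polynomial

theorem analytic_of_summable {E : Type*} [NormedAddCommGroup E] [NormedSpace ℝ E] [CompleteSpace E]
    (G : ℕ → E) (hG : Summable fun i => ‖G i‖) :
    AnalyticAt ℝ (fun x : ℝ => ∑' i, x ^ i • G i) 0 := by
  let p : FormalMultilinearSeries ℝ ℝ E := fun n => ContinuousMultilinearMap.mkPiRing ℝ (Fin n) (G n)
  have hr : (1 : ENNReal) ≤ p.radius := by
    have := p.le_radius_of_summable_norm (r := 1) (by simpa [p] using hG)
    simpa using this
  have h := p.hasFPowerSeriesOnBall (lt_of_lt_of_le zero_lt_one hr)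
  have h2 := h.analyticAt
  convert h2 using 2 with x
  simp [p, FormalMultilinearSeries.sum]
set_option linter.unusedSectionVars false
section alg
variable {B : Type*} [NormedRing B] [NormedAlgebra ℝ B] [CompleteSpace B] [NormOneClass B]

theorem norm_pow_le_one_of {S : B} (hS : ‖S‖ ≤ 1) (j : ℕ) : ‖S ^ j‖ ≤ 1 :=
  (norm_pow_le _ _).trans (pow_le_one₀ (norm_nonneg _) hS)

/-- multiplication operator -/
noncomputable def mulOp (S : B) (b : ℕ → ℝ) : B := ∑' j, b j • S ^ j

theorem mulOp_summable {S : B} (hS : ‖S‖ ≤ 1) (b : ℕ → ℝ) (hb : Summable fun j => |b j|) :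
    Summable fun j => ‖b j • S ^ j‖ := by
  refine Summable.of_nonneg_of_le (fun _ => norm_nonneg _) (fun n => ?_) hb
  rw [norm_smul]
  exact mul_le_of_le_one_right (norm_nonneg _) (norm_pow_le_one_of hS n)

theorem norm_mulOp {S : B} (hS : ‖S‖ ≤ 1) (b : ℕ → ℝ) (hb : Summable fun j => |b j|) :
    ‖mulOp S b‖ ≤ ∑' j, |b j| := by
  refine (norm_tsum_le_tsum_norm (mulOp_summable hS b hb)).trans ?_
  refine Summable.tsum_le_tsum (fun n => ?_) (mulOp_summable hS b hb) hb
  rw [norm_smul]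
  exact mul_le_of_le_one_right (norm_nonneg _) (norm_pow_le_one_of hS n)

theorem mulOp_shift {S : B} (hS : ‖S‖ ≤ 1) (b : ℕ → ℝ) (hb : Summable fun j => |b j|) (k : ℕ)
    (hk : ∀ j < k, b j = 0) :
    mulOp S b = S ^ k * mulOp S (fun j => b (j + k)) := by
  have hs : Summable fun j => |b (j + k)| := (summable_nat_add_iff (f := fun j => |b j|) k).2 hb
  rw [mulOp, mulOp, ← (mulOp_summable hS _ hs).of_norm.tsum_mul_left,
    ← (mulOp_summable hS b hb).of_norm.sum_add_tsum_nat_add k, Finset.sum_eq_zero, zero_add]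
  · congr 1; ext1 j; rw [mul_smul_comm, ← pow_add, add_comm k]
  · intro j hj; rw [hk j (Finset.mem_range.1 hj), zero_smul]

theorem isUnit_mulOp {S : B} (hS : ‖S‖ ≤ 1) (b : ℕ → ℝ) (hb : Summable fun j => |b j|)
    (hb0 : ∑' j, |b (j + 1)| < |b 0|) : IsUnit (mulOp S b) := by
  have hs : Summable fun j => |b (j + 1)| := (summable_nat_add_iff (f := fun j => |b j|) 1).2 hb
  have h0 : b 0 ≠ 0 := by
    intro h; rw [h, abs_zero] at hb0
    exact absurd hb0 (not_lt.2 (tsum_nonneg fun _ => abs_nonneg _))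
  have h1 : mulOp S b = b 0 • (1 - (-(b 0)⁻¹) • (S * mulOp S (fun j => b (j + 1)))) := by
    rw [mulOp, mulOp, ← (mulOp_summable hS _ hs).of_norm.tsum_mul_left,
      (mulOp_summable hS b hb).of_norm.tsum_eq_zero_add, smul_sub, smul_smul]
    simp only [mul_neg, mul_inv_cancel₀ h0, pow_zero, neg_smul, one_smul, sub_neg_eq_add]
    congr 2; ext1 j; rw [mul_smul_comm, ← pow_succ']
  have h2 : ‖(-(b 0)⁻¹) • (S * mulOp S (fun j => b (j + 1)))‖ < 1 := by
    rw [norm_smul, norm_neg, norm_inv, Real.norm_eq_abs, inv_mul_lt_one₀ (abs_pos.2 h0)]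
    refine lt_of_le_of_lt (norm_mul_le _ _) (lt_of_le_of_lt ?_ hb0)
    calc _ ≤ 1 * ∑' j, |b (j + 1)| := by
          gcongr
          exact norm_mulOp hS _ hs
      _ = _ := one_mul _
  rw [h1]
  have := isUnit_one_sub_of_norm_lt_one h2
  exact (IsUnit.smul (Units.mk0 (b 0) h0) this)

theorem pow_mul_pow_of {S L : B} (h : L * S = 1) (k : ℕ) : L ^ k * S ^ k = 1 := by
  induction k with
  | zero => simp
  | succ k ih => rw [pow_succ, pow_succ', mul_assoc, ← mul_assoc L, h, one_mul, ih]
end alg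

section wp
variable {A : Type*} [NormedAddCommGroup A] [NormedSpace ℝ A] [CompleteSpace A] [Nontrivial A]

theorem ev_pow {S : A →L[ℝ] A} {φ : A →L[ℝ] ℝ} {y : ℝ} (h : ∀ g, φ (S g) = y * φ g) (j : ℕ) (g : A) :
    φ ((S ^ j) g) = y ^ j * φ g := by
  induction j with
  | zero => simp
  | succ j ih => rw [pow_succ', mul_apply_eq_comp, h, ih]; ring

theorem ev_mulOp {S : A →L[ℝ] A} (hS : ‖S‖ ≤ 1) {φ : A →L[ℝ] ℝ} {y : ℝ}
    (h : ∀ g, φ (S g) = y * φ g) (b : ℕ → ℝ) (hb : Summable fun j => |b j|) (g : A) :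
    φ (mulOp S b g) = (∑' j, b j * y ^ j) * φ g := by
  have h := (mulOp_summable hS b hb).of_norm.hasSum
  have h1 := (h.mapL ((ContinuousLinearMap.apply ℝ A g))).mapL φ
  have h2 := h1.tsum_eq
  have h3 : ∀ j, φ ((ContinuousLinearMap.apply ℝ A g) (b j • S ^ j)) = b j * y ^ j * φ g := by
    intro j
    simp only [ContinuousLinearMap.apply_apply, map_smul,
      ev_pow ‹_›, smul_eq_mul]
    ring
  rw [mulOp, ← tsum_mul_right, ← tsum_congr h3, h2]
  rfl

theorem wp_generic (S L : A →L[ℝ] A) (hLS : L * S = 1) (hS : ‖S‖ ≤ 1) (e0 : A)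
    (coord : ℕ → A →L[ℝ] ℝ) (coord_L : ∀ n g, coord n (L g) = coord (n+1) g)
    (coord_e0 : ∀ n, coord n e0 = if n = 0 then 1 else 0)
    (coord_S0 : ∀ g, coord 0 (S g) = 0)
    (coord_S1 : ∀ n g, coord (n+1) (S g) = coord n g)
    (ev : ∀ y : ℝ, |y| ≤ 1/2 → A →L[ℝ] ℝ) (hev : ∀ y hy g, ev y hy g = ∑' n, coord n g * y ^ n)
    (hevn : ∀ y hy, ‖ev y hy‖ ≤ 2) (ev_S : ∀ y hy g, ev y hy (S g) = y * ev y hy g)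
    (a : ℕ → ℕ → ℝ) (ha : Summable fun p : ℕ × ℕ => |a p.1 p.2|) (k : ℕ)
    (hk : ∀ j < k, a 0 j = 0) (hk' : ∑' j, |a 0 (j + 1 + k)| < |a 0 k|) :
    ∃ c : ℕ → ℝ → ℝ, (∀ j, AnalyticAt ℝ (c j) 0) ∧ (∀ j < k, c j 0 = 0) ∧
    ∀ᶠ x in 𝓝 (0:ℝ), ∀ y : ℝ, |y| ≤ 1/2 → ∃ u : ℝ, u ≠ 0 ∧
      (∑' i, x ^ i * ∑' j, a i j * y ^ j) * u = y ^ k + ∑ j ∈ Finset.range k, c j x * y ^ j := by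
  have haj : ∀ i, Summable fun j => |a i j| := fun i => ha.prod_factor i
  have hai : Summable fun i => ∑' j, |a i j| := ha.prod
  set G : ℕ → A →L[ℝ] A := fun i => mulOp S (a i) with hG
  have hGs : Summable fun i => ‖G i‖ :=
    Summable.of_nonneg_of_le (fun _ => norm_nonneg _) (fun i => norm_mulOp hS _ (haj i)) hai
  set F : ℝ → A →L[ℝ] A := fun x => ∑' i, x ^ i • G i with hF
  have hFan : AnalyticAt ℝ F 0 := analytic_of_summable G hGs
  have hF0 : F 0 = G 0 := by
    simp only [hF]
    rw [tsum_eq_single 0]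
    · simp
    · intro i hi; simp [hi]
  set v : A →L[ℝ] A := mulOp S (fun j => a 0 (j + k)) with hv
  have hsk : Summable fun j => |a 0 (j + k)| :=
    (summable_nat_add_iff (f := fun j => |a 0 j|) k).2 (haj 0)
  have hGv : G 0 = S ^ k * v := mulOp_shift hS _ (haj 0) k hk
  have hvu : IsUnit v := isUnit_mulOp hS _ hsk (by simpa using hk')
  set T : ℝ → A →L[ℝ] A := fun x => L ^ k * F x with hT
  have hT0 : T 0 = v := by
    simp only [hT, hF0, hGv]; rw [← mul_assoc, pow_mul_pow_of hLS, one_mul]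
  have hTan : AnalyticAt ℝ T 0 := analyticAt_const.mul hFan
  obtain ⟨vu, hvu'⟩ := hvu
  have hinv : AnalyticAt ℝ (fun x => Ring.inverse (T x)) 0 := by
    have := analyticAt_inverse (𝕜 := ℝ) vu
    rw [hvu', ← hT0] at this
    exact AnalyticAt.comp (f := T) this hTan
  set q : ℝ → A := fun x => Ring.inverse (T x) e0 with hq
  have hqan : AnalyticAt ℝ q 0 :=
    ((ContinuousLinearMap.apply ℝ A e0).analyticAt _).comp hinv
  have hunit : ∀ᶠ x in 𝓝 (0:ℝ), IsUnit (T x) := by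
    have h1 : {z : A →L[ℝ] A | IsUnit z} ∈ 𝓝 (T 0) := by
      rw [hT0, ← hvu']; exact Units.nhds vu
    exact hTan.continuousAt h1
  have hTq : ∀ x, IsUnit (T x) → T x (q x) = e0 := by
    intro x hx
    have := Ring.mul_inverse_cancel _ hx
    calc T x (q x) = (T x * Ring.inverse (T x)) e0 := rfl
      _ = e0 := by rw [this]; rfl
  have hWan : AnalyticAt ℝ (fun x => F x (q x)) 0 :=
    ((ContinuousLinearMap.apply ℝ A e0).analyticAt _).comp (hFan.mul hinv)
  have hcL : ∀ m n g, coord n ((L ^ m) g) = coord (n + m) g := by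
    intro m
    induction m with
    | zero => simp
    | succ m ih =>
      intro n g
      rw [pow_succ', mul_apply_eq_comp, coord_L, ih]; congr 2; ring
  have hFev : ∀ x, |x| < 1 → ∀ y hy g, ev y hy (F x g) =
      (∑' i, x ^ i * ∑' j, a i j * y ^ j) * ev y hy g := by
    intro x hx y hy g
    have hs : Summable fun i => ‖x ^ i • G i‖ := by
      refine Summable.of_nonneg_of_le (fun _ => norm_nonneg _) (fun i => ?_) hGs
      rw [norm_smul, norm_pow]
      exact mul_le_of_le_one_left (norm_nonneg _) (pow_le_one₀ (norm_nonneg _) hx.le)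
    have h1 := ((hs.of_norm.hasSum.mapL ((ContinuousLinearMap.apply ℝ A g))).mapL (ev y hy)).tsum_eq
    have h3 : ∀ i, ev y hy ((ContinuousLinearMap.apply ℝ A g) (x ^ i • G i)) =
        x ^ i * (∑' j, a i j * y ^ j) * ev y hy g := by
      intro i
      simp only [ContinuousLinearMap.apply_apply, map_smul,
        hG, ev_mulOp hS (ev_S y hy) _ (haj i), smul_eq_mul]
      ring
    rw [← tsum_mul_right, ← tsum_congr h3, h1]
    rfl
  have hq0 : T 0 (q 0) = e0 := hTq 0 (by rw [hT0]; exact ⟨vu, hvu'⟩)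
  have hW0 : F 0 (q 0) = (S ^ k) e0 := by
    rw [← hq0, hT0, hF0, hGv]; rfl
  have hcS : ∀ m n, n < m → ∀ g, coord n ((S ^ m) g) = 0 := by
    intro m
    induction m with
    | zero => intro n hn; omega
    | succ m ih =>
      intro n hn g
      rw [pow_succ', mul_apply_eq_comp]
      cases n with
      | zero => exact coord_S0 _
      | succ n => rw [coord_S1]; exact ih n (by omega) g
  have hee : ∀ y hy, ev y hy e0 = 1 := by
    intro y hy
    rw [hev, tsum_eq_single 0]
    · simp [coord_e0]
    · intro n hn; simp [coord_e0, hn]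
  -- lower bound
  set V : ℝ := ∑' j, |a 0 (j + k)| with hV
  have hV0 : 0 < V := by
    have h1 : |a 0 k| ≤ V := by
      simpa using hsk.le_tsum 0 (fun _ _ => abs_nonneg _)
    refine lt_of_lt_of_le (lt_of_le_of_lt ?_ hk') h1
    exact tsum_nonneg fun _ => abs_nonneg _
  have hlow : ∀ y hy, 1 ≤ V * |ev y hy (q 0)| := by
    intro y hy
    have h1 : ev y hy (T 0 (q 0)) = 1 := by rw [hq0, hee]
    rw [hT0, hv, ev_mulOp hS (ev_S y hy) _ hsk] at h1
    rw [← abs_one, ← h1, abs_mul]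
    gcongr
    have hb : ∀ j, ‖a 0 (j + k) * y ^ j‖ ≤ |a 0 (j + k)| := by
      intro j
      rw [norm_mul, norm_pow]
      exact mul_le_of_le_one_right (norm_nonneg _) (pow_le_one₀ (norm_nonneg _) (hy.trans (by norm_num)))
    have hs : Summable fun j => ‖a 0 (j + k) * y ^ j‖ :=
      Summable.of_nonneg_of_le (fun _ => norm_nonneg _) hb hsk
    exact (norm_tsum_le_tsum_norm hs).trans (Summable.tsum_le_tsum hb hs hsk)
  refine ⟨fun j x => coord j (F x (q x)), fun j => ((coord j).analyticAt _).comp hWan, ?_, ?_⟩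
  · intro j hj
    simp only [hW0]
    exact hcS k j hj _
  have hqc : ∀ᶠ x in 𝓝 (0:ℝ), ‖q x - q 0‖ < 1 / (4 * V) := by
    have := hqan.continuousAt.tendsto.sub_const (q 0)
    rw [sub_self] at this
    have := this.norm
    rw [norm_zero] at this
    exact this.eventually_lt_const (by positivity)
  have hx1 : ∀ᶠ x in 𝓝 (0:ℝ), |x| < 1 := by
    have : Tendsto (fun x : ℝ => |x|) (𝓝 0) (𝓝 |0|) := continuous_abs.tendsto 0
    rw [abs_zero] at this
    exact this.eventually_lt_const one_pos
  filter_upwards [hqc, hunit, hx1] with x hx hxu hx1 y hy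
  refine ⟨ev y hy (q x), ?_, ?_⟩
  · intro h0
    have h1 := hlow y hy
    have h2 : |ev y hy (q 0)| ≤ 2 * ‖q x - q 0‖ := by
      have : ev y hy (q 0) = - ev y hy (q x - q 0) := by rw [map_sub, h0]; ring
      rw [this, abs_neg]
      refine ((ev y hy).le_opNorm _).trans ?_
      gcongr
      exact hevn y hy
    have : V * |ev y hy (q 0)| < 1 := by
      calc V * |ev y hy (q 0)| ≤ V * (2 * ‖q x - q 0‖) := by gcongr
        _ < V * (2 * (1 / (4 * V))) := by gcongr
        _ = 1/2 := by field_simp; norm_num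
        _ < 1 := by norm_num
    linarith
  · rw [← hFev x hx1 y hy, hev]
    have hc : ∀ n, coord (n + k) (F x (q x)) = if n = 0 then 1 else 0 := by
      intro n
      rw [← hcL, ← coord_e0, ← hTq x hxu]; rfl
    rw [tsum_eq_sum (s := Finset.range (k+1)), Finset.sum_range_succ, add_comm]
    · have := hc 0
      rw [zero_add] at this
      rw [this]; simp
    · intro n hn
      rw [Finset.mem_range, not_lt] at hn
      have := hc (n - k)
      rw [Nat.sub_add_cancel (by omega), if_neg (by omega)] at this
      rw [this, zero_mul]
end wp
abbrev SeqB := BoundedContinuousFunction ℕ ℝ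

noncomputable def shR : SeqB →L[ℝ] SeqB :=
  LinearMap.mkContinuous
    { toFun := fun g => BoundedContinuousFunction.ofNormedAddCommGroupDiscrete
        (fun n => Nat.casesOn n 0 (fun m => g m)) ‖g‖ (by
          intro n; cases n with
          | zero => simp
          | succ n => exact g.norm_coe_le_norm n)
      map_add' := by
        intro g h; ext n; cases n <;> simp
      map_smul' := by
        intro c g; ext n; cases n <;> simp } 1 (by
    intro g
    rw [BoundedContinuousFunction.norm_le (by positivity)]
    intro n; cases n with
    | zero => simp
    | succ n => simpa using g.norm_coe_le_norm n)

noncomputable def shL : SeqB →L[ℝ] SeqB :=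
  LinearMap.mkContinuous
    { toFun := fun g => BoundedContinuousFunction.ofNormedAddCommGroupDiscrete
        (fun n => g (n+1)) ‖g‖ (fun n => g.norm_coe_le_norm _)
      map_add' := by
        intro g h; ext n; simp
      map_smul' := by
        intro c g; ext n; simp } 1 (by
    intro g
    rw [BoundedContinuousFunction.norm_le (by positivity)]
    intro n; simpa using g.norm_coe_le_norm _)

theorem shR_zero (g : SeqB) : shR g 0 = 0 := rfl
theorem shR_succ (g : SeqB) (n : ℕ) : shR g (n+1) = g n := rfl
theorem shL_apply (g : SeqB) (n : ℕ) : shL g n = g (n+1) := rfl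
theorem shL_shR : shL * shR = 1 := by
  ext g n; rfl
theorem norm_shR : ‖shR‖ ≤ 1 := LinearMap.mkContinuous_norm_le _ zero_le_one _
noncomputable def e0 : SeqB := BoundedContinuousFunction.ofNormedAddCommGroupDiscrete
        (fun n => if n = 0 then 1 else 0) 1 (by intro n; split_ifs <;> simp)
theorem e0_apply (n : ℕ) : e0 n = if n = 0 then 1 else 0 := rfl

theorem ev_summable (y : ℝ) (hy : |y| ≤ 1/2) (g : SeqB) : Summable fun n => ‖g n * y ^ n‖ := by
  refine Summable.of_nonneg_of_le (fun _ => norm_nonneg _) (fun n => ?_)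
    ((summable_geometric_of_lt_one (r := (1/2:ℝ)) (by norm_num) (by norm_num)).mul_left ‖g‖)
  rw [norm_mul, norm_pow]
  gcongr
  · exact g.norm_coe_le_norm n
  · exact hy

noncomputable def ev (y : ℝ) (hy : |y| ≤ 1/2) : SeqB →L[ℝ] ℝ :=
  LinearMap.mkContinuous
    { toFun := fun g => ∑' n, g n * y ^ n
      map_add' := by
        intro g h
        rw [← ((ev_summable y hy g).of_norm).tsum_add (ev_summable y hy h).of_norm]
        congr 1; ext n; simp [add_mul]
      map_smul' := by
        intro c g; simp [mul_assoc, tsum_mul_left] } 2 (by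
    intro g
    refine (norm_tsum_le_tsum_norm (ev_summable y hy g)).trans ?_
    have h2 : HasSum (fun n => ‖g‖ * (1/2:ℝ)^n) (‖g‖ * 2) := hasSum_geometric_two.mul_left _
    rw [mul_comm, ← h2.tsum_eq]
    refine Summable.tsum_le_tsum (fun n => ?_) (ev_summable y hy g) h2.summable
    rw [norm_mul, norm_pow]
    gcongr
    · exact g.norm_coe_le_norm n
    · exact hy)
theorem ev_apply (y : ℝ) (hy : |y| ≤ 1/2) (g : SeqB) : ev y hy g = ∑' n, g n * y ^ n := rfl
theorem norm_ev (y : ℝ) (hy : |y| ≤ 1/2) : ‖ev y hy‖ ≤ 2 :=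
  LinearMap.mkContinuous_norm_le _ zero_le_two _
theorem ev_shR (y : ℝ) (hy : |y| ≤ 1/2) (g : SeqB) : ev y hy (shR g) = y * ev y hy g := by
  rw [ev_apply, (ev_summable y hy (shR g)).of_norm.tsum_eq_zero_add, ev_apply, ← tsum_mul_left]
  simp only [shR_zero, shR_succ, zero_mul, zero_add]
  congr 1; ext n; ring
theorem ev_e0 (y : ℝ) (hy : |y| ≤ 1/2) : ev y hy e0 = 1 := by
  rw [ev_apply, tsum_eq_single 0]
  · simp [e0_apply]
  · intro n hn; simp [e0_apply, hn]


theorem wp (a : ℕ → ℕ → ℝ) (ha : Summable fun p : ℕ × ℕ => |a p.1 p.2|) (k : ℕ)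
    (hk : ∀ j < k, a 0 j = 0) (hk' : ∑' j, |a 0 (j + 1 + k)| < |a 0 k|) :
    ∃ c : ℕ → ℝ → ℝ, (∀ j, AnalyticAt ℝ (c j) 0) ∧ (∀ j < k, c j 0 = 0) ∧
    ∀ᶠ x in 𝓝 (0:ℝ), ∀ y : ℝ, |y| ≤ 1/2 → ∃ u : ℝ, u ≠ 0 ∧
      (∑' i, x ^ i * ∑' j, a i j * y ^ j) * u = y ^ k + ∑ j ∈ Finset.range k, c j x * y ^ j := by
  haveI : Nontrivial SeqB := ⟨⟨e0, 0, fun h => by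
    have := congrArg (fun g : SeqB => g 0) h
    simp [e0_apply] at this⟩⟩
  refine wp_generic (A := SeqB) shR shL shL_shR norm_shR e0
    (fun n => BoundedContinuousFunction.evalCLM ℝ n) ?_ ?_ ?_ ?_ ev ?_ norm_ev ev_shR a ha k hk hk'
  · intro n g; rfl
  · intro n; rfl
  · intro g; rfl
  · intro n g; rfl
  · intro y hy g; rfl

theorem double_series (g : ℝ × ℝ → ℝ) (hg : AnalyticAt ℝ g 0) :
    ∃ a : ℕ → ℕ → ℝ, ∃ ρ > (0:ℝ), (Summable fun p : ℕ × ℕ => |a p.1 p.2| * ρ ^ (p.1 + p.2)) ∧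
      ∀ x y, |x| < ρ → |y| < ρ → g (x, y) = ∑' i, x ^ i * ∑' j, a i j * y ^ j := by
  obtain ⟨p, r, hp⟩ := hg
  obtain ⟨R, hR0, hRr⟩ := ENNReal.lt_iff_exists_nnreal_btwn.1 hp.r_pos
  have hR0' : 0 < (R : ℝ) := by exact_mod_cast hR0
  have hsum := p.summable_norm_mul_pow (lt_of_lt_of_le hRr hp.r_le)
  let P : (n : ℕ) → Finset (Fin n) → ℝ := fun n s =>
    p n (s.piecewise (fun _ => ((1:ℝ), (0:ℝ))) (fun _ => ((0:ℝ), (1:ℝ))))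
  have hP : ∀ n s, |P n s| ≤ ‖p n‖ := by
    intro n s
    refine ((p n).le_opNorm _).trans ?_
    refine mul_le_of_le_one_right (norm_nonneg _) (Finset.prod_le_one (fun _ _ => norm_nonneg _) ?_)
    intro i _
    by_cases h : i ∈ s <;> simp [h, Prod.norm_def]
  let a' : ℕ → ℕ → ℝ := fun n i => ∑ s ∈ Finset.powersetCard i (Finset.univ : Finset (Fin n)), P n s
  have ha' : ∀ n i, |a' n i| ≤ (n.choose i) * ‖p n‖ := by
    intro n i
    refine (Finset.abs_sum_le_sum_abs _ _).trans ((Finset.sum_le_sum fun s _ => hP n s).trans ?_)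
    simp
  have hexp : ∀ n (x y : ℝ), p n (fun _ => (x, y)) =
      ∑ q ∈ Finset.HasAntidiagonal.antidiagonal n, a' n q.1 * x ^ q.1 * y ^ q.2 := by
    intro n x y
    have h1 : (fun _ : Fin n => (x, y)) = (fun _ => ((x, 0) : ℝ × ℝ)) + (fun _ => ((0, y) : ℝ × ℝ)) := by
      ext i <;> simp
    have h2 : ∀ s : Finset (Fin n), p n (s.piecewise (fun _ => ((x, 0) : ℝ × ℝ)) (fun _ => ((0, y) : ℝ × ℝ)))
        = x ^ s.card * y ^ (n - s.card) * P n s := by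
      intro s
      have h3 : s.piecewise (fun _ => ((x, 0) : ℝ × ℝ)) (fun _ => ((0, y) : ℝ × ℝ)) =
        fun i => (s.piecewise (fun _ => x) (fun _ => y)) i •
          (s.piecewise (fun _ => ((1:ℝ), (0:ℝ))) (fun _ => ((0:ℝ), (1:ℝ)))) i := by
        ext i <;> by_cases h : i ∈ s <;> simp [h]
      rw [h3, ContinuousMultilinearMap.map_smul_univ, smul_eq_mul, Finset.prod_piecewise]
      simp [P, ← Finset.compl_eq_univ_sdiff, Finset.card_compl]
    rw [h1, ContinuousMultilinearMap.map_add_univ, Finset.Nat.sum_antidiagonal_eq_sum_range_succ_mk,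
      Finset.sum_congr rfl (fun s _ => h2 s), ← Finset.powerset_univ, Finset.sum_powerset]
    simp only [Finset.card_univ, Fintype.card_fin]
    refine Finset.sum_congr rfl fun i hi => ?_
    rw [Finset.sum_mul, Finset.sum_mul]
    refine Finset.sum_congr rfl fun s hs => ?_
    rw [(Finset.mem_powersetCard.1 hs).2]; ring
  have hS : Summable fun q : ℕ × ℕ => |a' (q.1 + q.2) q.1| * ((R:ℝ)/2) ^ (q.1 + q.2) := by
    rw [← Finset.HasAntidiagonal.sigmaAntidiagonalEquivProd.summable_iff]
    rw [summable_sigma_of_nonneg (fun _ => by simp only [Function.comp]; positivity)]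
    refine ⟨fun n => (hasSum_fintype _).summable, ?_⟩
    refine Summable.of_nonneg_of_le (fun n => tsum_nonneg fun _ => by simp only [Function.comp]; positivity)
      (fun n => ?_) hsum
    rw [tsum_fintype]
    simp only [Function.comp, Finset.HasAntidiagonal.sigmaAntidiagonalEquivProd_apply]
    rw [Finset.univ_eq_attach, Finset.sum_attach (Finset.HasAntidiagonal.antidiagonal n) (fun q : ℕ × ℕ => |a' (q.1 + q.2) q.1| * ((R:ℝ)/2) ^ (q.1 + q.2))]
    calc ∑ q ∈ Finset.HasAntidiagonal.antidiagonal n, |a' (q.1 + q.2) q.1| * ((R:ℝ)/2) ^ (q.1 + q.2)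
        ≤ ∑ q ∈ Finset.HasAntidiagonal.antidiagonal n, (n.choose q.1) * ‖p n‖ * ((R:ℝ)/2) ^ n := by
          refine Finset.sum_le_sum fun q hq => ?_
          rw [Finset.HasAntidiagonal.mem_antidiagonal.1 hq]
          gcongr
          exact ha' _ _
      _ = ‖p n‖ * R ^ n := by
          rw [← Finset.sum_mul, ← Finset.sum_mul, Finset.Nat.sum_antidiagonal_eq_sum_range_succ_mk]
          have := Nat.sum_range_choose n
          have h2 : ∑ i ∈ Finset.range n.succ, (n.choose i : ℝ) = 2 ^ n := by exact_mod_cast this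
          rw [h2, div_pow]; field_simp
  refine ⟨fun i j => a' (i + j) i, R / 2, by positivity, hS, ?_⟩
  intro x y hx hy
  have hmem : ((x, y) : ℝ × ℝ) ∈ Metric.eball (0 : ℝ × ℝ) r := by
    refine lt_trans ?_ hRr
    rw [edist_zero_right, ← ofReal_norm, Prod.norm_def]
    rw [ENNReal.ofReal_lt_coe_iff]
    · simp only [sup_lt_iff, Real.norm_eq_abs]
      constructor <;> linarith
    · positivity
  have h1 := hp.hasSum hmem
  rw [zero_add] at h1
  simp only [hexp] at h1
  have hS2 : Summable fun q : ℕ × ℕ => a' (q.1 + q.2) q.1 * x ^ q.1 * y ^ q.2 := by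
    refine Summable.of_norm_bounded hS fun q => ?_
    rw [norm_mul, norm_mul, norm_pow, norm_pow, mul_assoc, pow_add]
    gcongr
    · exact le_rfl
    · exact hx.le
    · exact hy.le
  have h3 := hS2.hasSum
  rw [← Finset.HasAntidiagonal.sigmaAntidiagonalEquivProd.hasSum_iff] at h3
  have h4 := h3.sigma (g := fun n => ∑ q ∈ Finset.HasAntidiagonal.antidiagonal n, a' n q.1 * x ^ q.1 * y ^ q.2) (by
    intro n
    convert hasSum_fintype _ using 1
    simp only [Function.comp, Finset.HasAntidiagonal.sigmaAntidiagonalEquivProd_apply]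
    rw [Finset.univ_eq_attach, Finset.sum_attach (Finset.HasAntidiagonal.antidiagonal n) (fun q : ℕ × ℕ => a' (q.1 + q.2) q.1 * x ^ q.1 * y ^ q.2)]
    refine Finset.sum_congr rfl fun q hq => ?_
    rw [Finset.HasAntidiagonal.mem_antidiagonal.1 hq])
  rw [h1.unique h4, hS2.tsum_prod]
  refine tsum_congr fun i => ?_
  rw [← tsum_mul_left]
  refine tsum_congr fun j => ?_
  ring

theorem wprep (g : ℝ × ℝ → ℝ) (hg : AnalyticAt ℝ g 0) (hnz : ¬ ∀ᶠ y in 𝓝 (0:ℝ), g (0, y) = 0) :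
    ∃ ρ > (0:ℝ), ∃ σ > (0:ℝ), ∃ k : ℕ, ∃ c : ℕ → ℝ → ℝ, (∀ j, AnalyticAt ℝ (c j) 0) ∧
    (∀ j < k, c j 0 = 0) ∧ ∀ᶠ x in 𝓝 (0:ℝ), ∀ y : ℝ, |y| ≤ 1/2 →
      (g (ρ * x, σ * y) = 0 ↔ y ^ k + ∑ j ∈ Finset.range k, c j x * y ^ j = 0) := by
  obtain ⟨a, ρ, hρ, hs, hgs⟩ := double_series g hg
  have hex : ∃ k, a 0 k ≠ 0 := by
    by_contra! hall
    apply hnz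
    have : Tendsto (fun x : ℝ => |x|) (𝓝 0) (𝓝 |0|) := continuous_abs.tendsto 0
    rw [abs_zero] at this
    filter_upwards [this.eventually_lt_const hρ] with y hy
    rw [hgs 0 y (by simpa using hρ) hy, tsum_eq_single 0]
    · simp [hall]
    · intro i hi; simp [hi]
  classical
  set k := Nat.find hex with hkdef
  have hk0 : a 0 k ≠ 0 := Nat.find_spec hex
  have hkm : ∀ j < k, a 0 j = 0 := fun j hj => not_not.1 (Nat.find_min hex hj)
  have h0s : Summable fun j => |a 0 j| * ρ ^ j := by simpa using hs.prod_factor 0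
  have h0s' : Summable fun j => |a 0 (j + 1 + k)| * ρ ^ j := by
    have h1 := (summable_nat_add_iff (f := fun j => |a 0 j| * ρ ^ j) (1 + k)).2 h0s
    have h2 := h1.mul_left ((ρ ^ (1 + k))⁻¹)
    refine h2.congr fun j => ?_
    rw [← add_assoc, add_assoc j, pow_add ρ j, ← add_assoc]
    have : ρ ^ (1 + k) ≠ 0 := by positivity
    field_simp
  set M := ∑' j, |a 0 (j + 1 + k)| * ρ ^ j with hM
  have hM0 : 0 ≤ M := tsum_nonneg fun _ => by positivity
  have hak : 0 < |a 0 k| := abs_pos.2 hk0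
  set σ := min ρ (|a 0 k| / (2 * (M + 1))) with hσ
  have hσ0 : 0 < σ := lt_min hρ (by positivity)
  have hσρ : σ ≤ ρ := min_le_left _ _
  have hσM : σ * M < |a 0 k| := by
    calc σ * M ≤ (|a 0 k| / (2 * (M + 1))) * M := by gcongr; exact min_le_right _ _
      _ < |a 0 k| := by
        rw [div_mul_eq_mul_div, div_lt_iff₀ (by positivity)]
        nlinarith
  obtain ⟨c, hc1, hc2, hc3⟩ := wp (fun i j => a i j * ρ ^ i * σ ^ j) (by
      refine Summable.of_nonneg_of_le (fun _ => abs_nonneg _) (fun q => ?_) hs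
      rw [abs_mul, abs_mul, abs_of_pos (pow_pos hρ _), abs_of_pos (pow_pos hσ0 _), pow_add, mul_assoc]
      gcongr) k (fun j hj => by simp [hkm j hj]) (by
      have hle : ∀ j, |a 0 (j + 1 + k) * ρ ^ 0 * σ ^ (j + 1 + k)| ≤ σ ^ (k+1) * (|a 0 (j + 1 + k)| * ρ ^ j) := by
        intro j
        rw [abs_mul, pow_zero, mul_one, abs_of_pos (pow_pos hσ0 _)]
        have : σ ^ (j + 1 + k) = σ ^ (k + 1) * σ ^ j := by rw [← pow_add]; congr 1; ring
        rw [this]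
        have : σ ^ j ≤ ρ ^ j := by gcongr
        calc _ = σ ^ (k+1) * (|a 0 (j + 1 + k)| * σ ^ j) := by ring
          _ ≤ _ := by gcongr
      calc ∑' j, |a 0 (j + 1 + k) * ρ ^ 0 * σ ^ (j + 1 + k)| ≤ ∑' j, σ ^ (k+1) * (|a 0 (j + 1 + k)| * ρ ^ j) := by
            refine Summable.tsum_le_tsum hle ?_ (h0s'.mul_left _)
            exact Summable.of_nonneg_of_le (fun _ => abs_nonneg _) hle (h0s'.mul_left _)
        _ = σ ^ k * (σ * M) := by rw [tsum_mul_left, hM]; ring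
        _ < σ ^ k * |a 0 k| := by gcongr
        _ = |a 0 k * ρ ^ 0 * σ ^ k| := by
          rw [abs_mul, pow_zero, mul_one, abs_of_pos (pow_pos hσ0 _), mul_comm])
  refine ⟨ρ, hρ, σ, hσ0, k, c, hc1, hc2, ?_⟩
  have : Tendsto (fun x : ℝ => |x|) (𝓝 0) (𝓝 |0|) := continuous_abs.tendsto 0
  rw [abs_zero] at this
  filter_upwards [this.eventually_lt_const one_pos, hc3] with x hx1 hx y hy
  obtain ⟨u, hu, hxu⟩ := hx y hy
  rw [← hxu, mul_eq_zero, or_iff_left hu, hgs]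
  · have : ∀ i, x ^ i * ∑' j, a i j * ρ ^ i * σ ^ j * y ^ j = (ρ * x) ^ i * ∑' j, a i j * (σ * y) ^ j := by
      intro i
      rw [← tsum_mul_left, ← tsum_mul_left]
      refine tsum_congr fun j => ?_
      rw [mul_pow, mul_pow]; ring
    rw [tsum_congr this]
  · rw [abs_mul, abs_of_pos hρ]; nlinarith
  · rw [abs_mul, abs_of_pos hσ0]; nlinarith [abs_nonneg y]

theorem card_roots_mod_two (p : ℝ[X]) (hp : p ≠ 0) : p.roots.card % 2 = p.natDegree % 2 := by
  induction p using WfDvdMonoid.induction_on_irreducible with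
  | zero => exact absurd rfl hp
  | unit u hu => 
    rw [Polynomial.natDegree_eq_zero_of_isUnit hu]
    obtain ⟨c, hc, rfl⟩ := Polynomial.isUnit_iff.1 hu
    simp
  | mul a i ha hi ih =>
    rw [Polynomial.roots_mul hp, Multiset.card_add, Polynomial.natDegree_mul hi.ne_zero ha,
      Nat.add_mod, ih ha, Nat.add_mod i.natDegree]
    congr 2
    have h2 := hi.natDegree_le_two
    have h0 := hi.natDegree_pos
    rcases (by omega : i.natDegree = 1 ∨ i.natDegree = 2) with h | h
    · rw [h, Polynomial.roots_degree_eq_one (Polynomial.degree_eq_iff_natDegree_eq_of_pos one_pos |>.2 h)]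
      simp
    · rw [h]
      have : i.roots = 0 := by
        rw [Multiset.eq_zero_iff_forall_notMem]
        intro x hx
        have := Polynomial.degree_eq_one_of_irreducible_of_root hi (Polynomial.isRoot_of_mem_roots hx)
        have : i.natDegree = 1 := Polynomial.natDegree_eq_of_degree_eq_some (by exact_mod_cast this)
        omega
      simp [this]

/-- the ring of germs of meromorphic functions -/
def merRing : Subring (Germ (𝓝[≠] (0:ℝ)) ℝ) where
  carrier := {g | ∃ f : ℝ → ℝ, MeromorphicAt f 0 ∧ g = (f : Germ (𝓝[≠] (0:ℝ)) ℝ)}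
  mul_mem' := by
    rintro _ _ ⟨f, hf, rfl⟩ ⟨g, hg, rfl⟩
    exact ⟨f * g, hf.mul hg, rfl⟩
  one_mem' := ⟨fun _ => 1, MeromorphicAt.const _ _, rfl⟩
  add_mem' := by
    rintro _ _ ⟨f, hf, rfl⟩ ⟨g, hg, rfl⟩
    exact ⟨f + g, hf.add hg, rfl⟩
  zero_mem' := ⟨fun _ => 0, MeromorphicAt.const _ _, rfl⟩
  neg_mem' := by
    rintro _ ⟨f, hf, rfl⟩
    exact ⟨-f, hf.neg, rfl⟩

theorem merRing_isField : IsField merRing where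
  exists_pair_ne := ⟨0, 1, zero_ne_one⟩
  mul_comm := mul_comm
  mul_inv_cancel := by
    rintro ⟨_, f, hf, rfl⟩ hne
    refine ⟨⟨((f⁻¹ : ℝ → ℝ) : Germ (𝓝[≠] (0:ℝ)) ℝ), f⁻¹, hf.inv, rfl⟩, ?_⟩
    apply Subtype.ext
    change ((f * f⁻¹ : ℝ → ℝ) : Germ (𝓝[≠] (0:ℝ)) ℝ) = ((1 : ℝ → ℝ) : Germ (𝓝[≠] (0:ℝ)) ℝ)
    rw [Germ.coe_eq]
    rcases hf.eventually_eq_zero_or_eventually_ne_zero with h | h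
    · exfalso; apply hne; apply Subtype.ext
      change (f : Germ (𝓝[≠] (0:ℝ)) ℝ) = ((0 : ℝ → ℝ) : Germ (𝓝[≠] (0:ℝ)) ℝ)
      rw [Germ.coe_eq]; exact h
    · filter_upwards [h] with x hx
      simp [hx]

noncomputable instance : Field merRing := merRing_isField.toField

instance : CharZero merRing := by
  refine ⟨fun m n h => ?_⟩
  have h1 := congrArg (Subtype.val) h
  have h2 : ((fun _ => (m:ℝ) : ℝ → ℝ) : Germ (𝓝[≠] (0:ℝ)) ℝ) = ((fun _ => (n:ℝ) : ℝ → ℝ) : Germ (𝓝[≠] (0:ℝ)) ℝ) := h1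
  rw [Germ.coe_eq] at h2
  obtain ⟨x, hx⟩ := h2.exists
  exact Nat.cast_injective hx

abbrev PGerm := Germ (𝓝[≠] (0:ℝ)) ℝ[X]

noncomputable def cHom : Germ (𝓝[≠] (0:ℝ)) ℝ →+* PGerm where
  toFun g := g.map (fun c => (C c : ℝ[X]))
  map_one' := by
    change (((fun _ => C 1) : ℝ → ℝ[X]) : PGerm) = ((fun _ => 1 : ℝ → ℝ[X]) : PGerm)
    simp
  map_zero' := by
    change (((fun _ => C 0) : ℝ → ℝ[X]) : PGerm) = ((fun _ => 0 : ℝ → ℝ[X]) : PGerm)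
    simp
  map_mul' := by
    intro a b
    induction a using Germ.inductionOn with | _ a
    induction b using Germ.inductionOn with | _ b
    change (((fun x => C (a x * b x)) : ℝ → ℝ[X]) : PGerm) = ((fun x => C (a x) * C (b x) : ℝ → ℝ[X]) : PGerm)
    simp
  map_add' := by
    intro a b
    induction a using Germ.inductionOn with | _ a
    induction b using Germ.inductionOn with | _ b
    change (((fun x => C (a x + b x)) : ℝ → ℝ[X]) : PGerm) = ((fun x => C (a x) + C (b x) : ℝ → ℝ[X]) : PGerm)
    simp

noncomputable def pHom : merRing[X] →+* PGerm :=
  Polynomial.eval₂RingHom (cHom.comp merRing.subtype) (((fun _ => X) : ℝ → ℝ[X]) : PGerm)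

theorem coe_sum_germ {ι : Type*} (s : Finset ι) (F : ι → ℝ → ℝ[X]) :
    ((fun x => ∑ i ∈ s, F i x : ℝ → ℝ[X]) : PGerm) = ∑ i ∈ s, ((F i : ℝ → ℝ[X]) : PGerm) := by
  have := map_sum (Germ.coeRingHom (R := ℝ[X]) (𝓝[≠] (0:ℝ))) F s
  simp only [Germ.coe_coeRingHom] at this
  rw [← this]
  congr 1
  ext1 x; simp

theorem pHom_rep (Q : merRing[X]) (f : ℕ → ℝ → ℝ) (n : ℕ)
    (hf : ∀ i, ((f i : ℝ → ℝ) : Germ (𝓝[≠] (0:ℝ)) ℝ) = (Q.coeff i : Germ (𝓝[≠] (0:ℝ)) ℝ)) (hn : Q.natDegree < n) :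
    pHom Q = ((fun x => ∑ i ∈ Finset.range n, C (f i x) * X ^ i : ℝ → ℝ[X]) : PGerm) := by
  rw [pHom, Polynomial.coe_eval₂RingHom, Polynomial.eval₂_eq_sum_range' _ hn, coe_sum_germ]
  refine Finset.sum_congr rfl fun i _ => ?_
  rw [RingHom.comp_apply, Subring.coe_subtype, ← hf]
  rfl

theorem pHom_derivative (Q : merRing[X]) : pHom (derivative Q) = (pHom Q).map (fun q => derivative q) := by
  have hadd : ∀ a b : PGerm, (a + b).map (fun q : ℝ[X] => derivative q) =
      a.map (fun q => derivative q) + b.map (fun q => derivative q) := by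
    intro a b
    induction a using Germ.inductionOn with | _ a
    induction b using Germ.inductionOn with | _ b
    change (((fun x => derivative (a x + b x)) : ℝ → ℝ[X]) : PGerm) = ((fun x => derivative (a x) + derivative (b x) : ℝ → ℝ[X]) : PGerm)
    simp
  induction Q using Polynomial.induction_on' with
  | add p q hp hq => rw [derivative_add, map_add, map_add, hp, hq, hadd]
  | monomial n a =>
    obtain ⟨_, f, hf, rfl⟩ := a
    rw [derivative_monomial]
    simp only [pHom, Polynomial.coe_eval₂RingHom, Polynomial.eval₂_monomial]
    change (((fun x => C (f x * n) * X ^ (n-1)) : ℝ → ℝ[X]) : PGerm) = ((fun x => derivative (C (f x) * X ^ n) : ℝ → ℝ[X]) : PGerm)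
    congr 1; ext1 x
    rw [derivative_C_mul_X_pow]

set_option maxHeartbeats 1000000 in
theorem squarefree_part (c : ℕ → ℝ → ℝ) (hc : ∀ j, AnalyticAt ℝ (c j) 0) (k : ℕ) :
    ∃ d : ℕ, ∃ b : ℕ → ℝ → ℝ, ∀ᶠ x in 𝓝[≠] (0:ℝ), (∀ i, i < d → ContinuousAt (b i) x) ∧
      (X ^ d + ∑ i ∈ Finset.range d, C (b i x) * X ^ i : ℝ[X]).Separable ∧
      ∀ y : ℝ, (y ^ d + ∑ i ∈ Finset.range d, b i x * y ^ i = 0 ↔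
        y ^ k + ∑ i ∈ Finset.range k, c i x * y ^ i = 0) := by
  classical
  let cg : ℕ → merRing := fun i => ⟨(c i : Germ (𝓝[≠] (0:ℝ)) ℝ), c i, (hc i).meromorphicAt, rfl⟩
  let W : merRing[X] := X ^ k + ∑ i ∈ Finset.range k, C (cg i) * X ^ i
  have hdeg : (∑ i ∈ Finset.range k, C (cg i) * X ^ i : merRing[X]).degree < k := by
    rw [← Fin.sum_univ_eq_sum_range (fun i => C (cg i) * X ^ i : ℕ → merRing[X])]
    exact Polynomial.degree_sum_fin_lt (fun i : Fin k => cg i)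
  have hWm : W.Monic := Polynomial.monic_X_pow_add hdeg
  let P₀ := UniqueFactorizationMonoid.radical W
  have hP₀ : P₀ ≠ 0 := UniqueFactorizationMonoid.radical_ne_zero
  let P := P₀ * C (P₀.leadingCoeff)⁻¹
  have hPm : P.Monic := Polynomial.monic_mul_leadingCoeff_inv hP₀
  have hass : Associated P₀ P :=
    associated_mul_unit_right _ _ (Polynomial.isUnit_C.2 (isUnit_iff_ne_zero.2
      (inv_ne_zero (Polynomial.leadingCoeff_ne_zero.2 hP₀))))
  clear_value P
  have hPW : P ∣ W := hass.symm.dvd.trans UniqueFactorizationMonoid.radical_dvd_self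
  have hPsep : P.Separable := by
    rw [PerfectField.separable_iff_squarefree]
    exact hass.squarefree_iff.1 UniqueFactorizationMonoid.squarefree_radical
  obtain ⟨N, hN⟩ : ∃ N, W ∣ P ^ N := by
    obtain ⟨N, hN⟩ := UniqueFactorizationMonoid.exists_dvd_radical_self_pow hWm.ne_zero
    exact ⟨N, hN.trans (pow_dvd_pow_of_dvd hass.dvd N)⟩
  obtain ⟨Q, hQ⟩ := hPW
  obtain ⟨R, hR⟩ := hN
  obtain ⟨A, B, hAB⟩ := hPsep
  set d := P.natDegree with hd
  have hrep : ∀ i, ∃ f : ℝ → ℝ, MeromorphicAt f 0 ∧ (P.coeff i : Germ (𝓝[≠] (0:ℝ)) ℝ) = (f : Germ (𝓝[≠] (0:ℝ)) ℝ) :=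
    fun i => (P.coeff i).2
  choose b hb hbe using hrep
  refine ⟨d, b, ?_⟩
  have hlead : b d =ᶠ[𝓝[≠] (0:ℝ)] fun _ => 1 := by
    rw [← Germ.coe_eq, ← hbe, hd, hPm.coeff_natDegree]; rfl
  let Pf : ℝ → ℝ[X] := fun x => X ^ d + ∑ i ∈ Finset.range d, C (b i x) * X ^ i
  have hPf : pHom P = (Pf : PGerm) := by
    rw [pHom_rep P b (d+1) (fun i => (hbe i).symm) (Nat.lt_succ_self _), Germ.coe_eq]
    filter_upwards [hlead] with x hx
    simp only [Pf]
    rw [Finset.sum_range_succ, hx, C_1, one_mul, add_comm]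
  let Wf : ℝ → ℝ[X] := fun x => X ^ k + ∑ i ∈ Finset.range k, C (c i x) * X ^ i
  have hWf : pHom W = (Wf : PGerm) := by
    have h1 : (Wf : PGerm) = ((fun _ => X ^ k : ℝ → ℝ[X]) : PGerm) +
      ((fun x => ∑ i ∈ Finset.range k, C (c i x) * X ^ i : ℝ → ℝ[X]) : PGerm) := rfl
    rw [h1, coe_sum_germ]
    simp only [W, map_add, map_sum, map_mul, map_pow]
    simp only [pHom, Polynomial.coe_eval₂RingHom, Polynomial.eval₂_C, Polynomial.eval₂_X]
    rfl
  obtain ⟨Qf, hQf⟩ : ∃ Qf : ℝ → ℝ[X], pHom Q = (Qf : PGerm) := (Quotient.exists_rep (pHom Q)).imp fun _ h => h.symm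
  obtain ⟨Rf, hRf⟩ : ∃ Qf : ℝ → ℝ[X], pHom R = (Qf : PGerm) := (Quotient.exists_rep (pHom R)).imp fun _ h => h.symm
  obtain ⟨Af, hAf⟩ : ∃ Qf : ℝ → ℝ[X], pHom A = (Qf : PGerm) := (Quotient.exists_rep (pHom A)).imp fun _ h => h.symm
  obtain ⟨Bf, hBf⟩ : ∃ Qf : ℝ → ℝ[X], pHom B = (Qf : PGerm) := (Quotient.exists_rep (pHom B)).imp fun _ h => h.symm
  have e1 : Wf =ᶠ[𝓝[≠] (0:ℝ)] fun x => Pf x * Qf x := by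
    rw [← Germ.coe_eq, ← hWf, hQ, map_mul, hPf, hQf]; rfl
  have e2 : (fun x => Pf x ^ N) =ᶠ[𝓝[≠] (0:ℝ)] fun x => Wf x * Rf x := by
    rw [← Germ.coe_eq]
    have := congrArg pHom hR
    rw [map_pow, map_mul, hPf, hWf, hRf] at this
    exact this
  have e3 : (fun x => Af x * Pf x + Bf x * derivative (Pf x)) =ᶠ[𝓝[≠] (0:ℝ)] fun _ => 1 := by
    rw [← Germ.coe_eq]
    have := congrArg pHom hAB
    rw [map_add, map_mul, map_mul, pHom_derivative, map_one, hPf, hAf, hBf] at this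
    exact this
  have e4 : ∀ᶠ x in 𝓝[≠] (0:ℝ), ∀ i ∈ Finset.range d, ContinuousAt (b i) x := by
    rw [Filter.eventually_all_finset]
    exact fun i _ => (hb i).eventually_continuousAt
  filter_upwards [e1, e2, e3, e4] with x h1 h2 h3 h4
  refine ⟨fun i hi => h4 i (Finset.mem_range.2 hi), ⟨Af x, Bf x, h3⟩, fun y => ?_⟩
  have hP : (Pf x).eval y = y ^ d + ∑ i ∈ Finset.range d, b i x * y ^ i := by
    simp [Pf, Polynomial.eval_finsetSum]
  have hW : (Wf x).eval y = y ^ k + ∑ i ∈ Finset.range k, c i x * y ^ i := by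
    simp [Wf, Polynomial.eval_finsetSum]
  rw [← hP, ← hW]
  constructor
  · intro h; rw [h1, eval_mul, h, zero_mul]
  · intro h
    have := congrArg (Polynomial.eval y) h2
    simp only [eval_pow, eval_mul, h, zero_mul] at this
    by_contra hne
    exact pow_ne_zero N hne this

theorem injOn_of_deriv_ne {f f' : ℝ → ℝ} {a b : ℝ} (hf : ∀ t, HasDerivAt f (f' t) t)
    (h : ∀ t ∈ Icc a b, f' t ≠ 0) : InjOn f (Icc a b) := by
  have key : ∀ x ∈ Icc a b, ∀ y ∈ Icc a b, x < y → f x ≠ f y := by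
    intro x hx y hy hxy he
    obtain ⟨c, hc, hc'⟩ := exists_hasDerivAt_eq_zero hxy
      (fun t _ => (hf t).continuousAt.continuousWithinAt) he (fun t _ => hf t)
    exact h c ⟨hx.1.trans hc.1.le, hc.2.le.trans hy.2⟩ hc'
  intro x hx y hy he
  rcases lt_trichotomy x y with h1 | h1 | h1
  · exact absurd he (key x hx y hy h1)
  · exact h1
  · exact absurd he.symm (key y hy x hx h1)

theorem local_roots (F F' : ℝ → ℝ → ℝ) (x0 : ℝ) (S : Finset ℝ) (hS : ∀ t, F x0 t = 0 ↔ t ∈ S)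
    (hd : ∀ x t, HasDerivAt (F x) (F' x t) t)
    (hF : ∀ t, ContinuousAt (fun q : ℝ × ℝ => F q.1 q.2) (x0, t))
    (hF' : ∀ t, ContinuousAt (fun q : ℝ × ℝ => F' q.1 q.2) (x0, t))
    (hne : ∀ t, F x0 t = 0 → F' x0 t ≠ 0)
    (hb : ∀ᶠ x in 𝓝 x0, ∀ t, F x t = 0 → |t| ≤ 1) :
    ∀ᶠ ε in 𝓝[>] (0:ℝ), ∀ᶠ x in 𝓝 x0, ∃ φ : ℝ → ℝ, (∀ s ∈ S, |φ s - s| < ε) ∧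
      (∀ s ∈ S, ∀ s' ∈ S, s < s' → φ s < φ s') ∧ ∀ t, F x t = 0 ↔ ∃ s ∈ S, φ s = t := by
  have g1 : ∀ᶠ ε in 𝓝[>] (0:ℝ), ∀ s ∈ S, ∀ s' ∈ S, s < s' → 2 * ε ≤ s' - s := by
    rw [Filter.eventually_all_finset]; intro s _
    rw [Filter.eventually_all_finset]; intro s' _
    by_cases h : s < s'
    · have : ∀ᶠ ε in 𝓝[>] (0:ℝ), ε < (s' - s) / 2 :=
        nhdsWithin_le_nhds (eventually_lt_nhds (by linarith))
      filter_upwards [this] with ε hε _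
      linarith
    · exact Eventually.of_forall fun _ h' => absurd h' h
  have g2 : ∀ᶠ ε in 𝓝[>] (0:ℝ), ∀ s ∈ S, ∀ t ∈ Icc (s - ε) (s + ε), F' x0 t ≠ 0 := by
    rw [Filter.eventually_all_finset]; intro s hs
    have h1 : ContinuousAt (fun t => F' x0 t) s :=
      ContinuousAt.comp (f := fun t : ℝ => (x0, t)) (hF' s) (by fun_prop)
    have h2 := h1.eventually_ne (hne s ((hS s).2 hs))
    obtain ⟨δ, hδ, h3⟩ := Metric.eventually_nhds_iff.1 h2
    have : ∀ᶠ ε in 𝓝[>] (0:ℝ), ε < δ := nhdsWithin_le_nhds (eventually_lt_nhds hδ)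
    filter_upwards [this] with ε hε t ht
    refine h3 ?_
    rw [Real.dist_eq, abs_lt]
    constructor <;> linarith [ht.1, ht.2]
  filter_upwards [g1, g2, self_mem_nhdsWithin] with ε hε1 hε2 hε0
  have hε0 : 0 < ε := hε0
  have e1 : ∀ᶠ x in 𝓝 x0, ∀ s ∈ S, ∀ t ∈ Icc (s - ε) (s + ε), F' x t ≠ 0 := by
    rw [Filter.eventually_all_finset]; intro s hs
    refine isCompact_Icc.eventually_forall_of_forall_eventually fun t ht => ?_
    exact (hF' t).eventually_ne (hε2 s hs t ht)
  have e2 : ∀ᶠ x in 𝓝 x0, ∀ t ∈ Icc (-1:ℝ) 1 \ ⋃ s ∈ S, Ioo (s - ε) (s + ε), F x t ≠ 0 := by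
    have hK : IsCompact (Icc (-1:ℝ) 1 \ ⋃ s ∈ S, Ioo (s - ε) (s + ε)) :=
      isCompact_Icc.diff (isOpen_biUnion fun s _ => isOpen_Ioo)
    refine hK.eventually_forall_of_forall_eventually fun t ht => ?_
    refine (hF t).eventually_ne ?_
    intro h0
    apply ht.2
    simp only [mem_iUnion]
    exact ⟨t, (hS t).1 h0, by constructor <;> linarith⟩
  have e3 : ∀ᶠ x in 𝓝 x0, ∀ s ∈ S, F x (s - ε) * F x (s + ε) < 0 := by
    rw [Filter.eventually_all_finset]; intro s hs
    have hc : ∀ t, ContinuousAt (fun x => F x t) x0 := fun t =>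
      ContinuousAt.comp (f := fun x : ℝ => (x, t)) (hF t) (by fun_prop)
    have h0 : F x0 (s - ε) * F x0 (s + ε) < 0 := by
      have hz := (hS s).2 hs
      have hm : s ∈ Icc (s - ε) (s + ε) := by constructor <;> linarith
      have hl : s - ε ∈ Icc (s - ε) (s + ε) := by constructor <;> linarith
      have hr : s + ε ∈ Icc (s - ε) (s + ε) := by constructor <;> linarith
      rcases ContinuousOn.strictMonoOn_of_injOn_Icc' (by linarith : s - ε ≤ s + ε)
        (fun t _ => (hd x0 t).continuousAt.continuousWithinAt)
        (injOn_of_deriv_ne (hd x0) (hε2 s hs)) with h | h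
      · have h1 := h hl hm (by linarith)
        have h2 := h hm hr (by linarith)
        rw [hz] at h1 h2
        exact mul_neg_of_neg_of_pos h1 h2
      · have h1 := h hl hm (by linarith)
        have h2 := h hm hr (by linarith)
        rw [hz] at h1 h2
        exact mul_neg_of_pos_of_neg h1 h2
    exact ((hc _).mul (hc _)).eventually_lt continuousAt_const h0
  filter_upwards [e1, e2, e3, hb] with x h1 h2 h3 h4
  have hcont : ∀ s, ContinuousOn (F x) (Icc (s - ε) (s + ε)) :=
    fun s t _ => (hd x t).continuousAt.continuousWithinAt
  have hex : ∀ s, ∃ t, s ∈ S → t ∈ Ioo (s - ε) (s + ε) ∧ F x t = 0 := by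
    intro s
    by_cases hs : s ∈ S
    · have hle : s - ε ≤ s + ε := by linarith
      rcases mul_neg_iff.1 (h3 s hs) with h | h
      · obtain ⟨t, ht, ht0⟩ := intermediate_value_Ioo' hle (hcont s) (show (0:ℝ) ∈ Ioo _ _ from ⟨h.2, h.1⟩)
        exact ⟨t, fun _ => ⟨ht, ht0⟩⟩
      · obtain ⟨t, ht, ht0⟩ := intermediate_value_Ioo hle (hcont s) (show (0:ℝ) ∈ Ioo _ _ from h)
        exact ⟨t, fun _ => ⟨ht, ht0⟩⟩
    · exact ⟨0, fun h => absurd h hs⟩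
  choose φ hφ using hex
  refine ⟨φ, ?_, ?_, ?_⟩
  · intro s hs
    have := (hφ s hs).1
    rw [abs_lt]; constructor <;> linarith [this.1, this.2]
  · intro s hs s' hs' hlt
    have a1 := (hφ s hs).1
    have a2 := (hφ s' hs').1
    have := hε1 s hs s' hs' hlt
    linarith [a1.2, a2.1]
  · intro t
    constructor
    · intro ht
      by_contra hcon
      refine h2 t ⟨abs_le.1 (h4 t ht), ?_⟩ ht
      simp only [mem_iUnion, not_exists]
      intro s hs hts
      refine hcon ⟨s, hs, ?_⟩
      refine injOn_of_deriv_ne (hd x) (h1 s hs) (Ioo_subset_Icc_self (hφ s hs).1) (Ioo_subset_Icc_self hts) ?_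
      rw [ht, (hφ s hs).2]
    · rintro ⟨s, hs, rfl⟩
      exact (hφ s hs).2

theorem root_curves (δ : ℝ) (hδ : 0 < δ) (d : ℕ) (b : ℕ → ℝ → ℝ)
    (hbc : ∀ x ∈ Ioo 0 δ, ∀ i < d, ContinuousAt (b i) x)
    (hsep : ∀ x ∈ Ioo 0 δ, (X ^ d + ∑ i ∈ Finset.range d, C (b i x) * X ^ i : ℝ[X]).Separable)
    (hbd : ∀ x ∈ Ioo 0 δ, ∀ t : ℝ, t ^ d + ∑ i ∈ Finset.range d, b i x * t ^ i = 0 → |t| ≤ 1) :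
    ∃ n : ℕ, n % 2 = d % 2 ∧ ∃ y : Fin n → ℝ → ℝ, (∀ i, ContinuousOn (y i) (Ioo 0 δ)) ∧
      (∀ x ∈ Ioo 0 δ, Function.Injective fun i => y i x) ∧
      ∀ x ∈ Ioo 0 δ, ∀ t, t ^ d + ∑ i ∈ Finset.range d, b i x * t ^ i = 0 ↔ ∃ i, y i x = t := by
  classical
  set P : ℝ → ℝ[X] := fun x => X ^ d + ∑ i ∈ Finset.range d, C (b i x) * X ^ i with hP
  have hdeg : ∀ x, (∑ i ∈ Finset.range d, C (b i x) * X ^ i : ℝ[X]).degree < d := by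
    intro x
    rw [← Fin.sum_univ_eq_sum_range (fun i => C (b i x) * X ^ i : ℕ → ℝ[X])]
    exact Polynomial.degree_sum_fin_lt (fun i : Fin d => b i x)
  have hPm : ∀ x, (P x).Monic := fun x => Polynomial.monic_X_pow_add (hdeg x)
  have hPd : ∀ x, (P x).natDegree = d := fun x => by
    have : (P x).degree = d := by
      simp only [hP]
      rw [degree_add_eq_left_of_degree_lt] <;> rw [degree_X_pow]
      exact hdeg x
    exact natDegree_eq_of_degree_eq_some this
  set F : ℝ → ℝ → ℝ := fun x t => t ^ d + ∑ i ∈ Finset.range d, b i x * t ^ i with hF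
  set F' : ℝ → ℝ → ℝ := fun x t => d * t ^ (d-1) + ∑ i ∈ Finset.range d, b i x * (i * t ^ (i-1)) with hF'
  have hPF : ∀ x t, (P x).eval t = F x t := by
    intro x t; simp [hP, hF, eval_finsetSum]
  have hPF' : ∀ x t, (derivative (P x)).eval t = F' x t := by
    intro x t; simp [hP, hF', eval_finsetSum, derivative_sum, derivative_X_pow]
  have hder : ∀ x t, HasDerivAt (F x) (F' x t) t := by
    intro x t
    have := (P x).hasDerivAt t
    rw [hPF'] at this
    exact this.congr_of_eventuallyEq (Eventually.of_forall fun s => (hPF x s).symm)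
  have hcb : ∀ x ∈ Ioo 0 δ, ∀ t, ∀ i ∈ Finset.range d, ContinuousAt (fun q : ℝ × ℝ => b i q.1) (x, t) :=
    fun x hx t i hi => ContinuousAt.comp (f := Prod.fst) (hbc x hx i (Finset.mem_range.1 hi)) continuousAt_fst
  have hFc : ∀ x ∈ Ioo 0 δ, ∀ t, ContinuousAt (fun q : ℝ × ℝ => F q.1 q.2) (x, t) := by
    intro x hx t
    refine ContinuousAt.add (by fun_prop) ?_
    exact tendsto_finsetSum _ fun i hi => (hcb x hx t i hi).mul (by fun_prop : ContinuousAt (fun q : ℝ × ℝ => q.2 ^ i) (x, t))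
  have hFc' : ∀ x ∈ Ioo 0 δ, ∀ t, ContinuousAt (fun q : ℝ × ℝ => F' q.1 q.2) (x, t) := by
    intro x hx t
    refine ContinuousAt.add (by fun_prop) ?_
    exact tendsto_finsetSum _ fun i hi => (hcb x hx t i hi).mul (by fun_prop : ContinuousAt (fun q : ℝ × ℝ => (i:ℝ) * q.2 ^ (i-1)) (x, t))
  set S : ℝ → Finset ℝ := fun x => (P x).roots.toFinset with hS
  have hmem : ∀ x t, F x t = 0 ↔ t ∈ S x := by
    intro x t
    rw [hS, Multiset.mem_toFinset, mem_roots (hPm x).ne_zero, IsRoot.def, hPF]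
  have hloc : ∀ x0 ∈ Ioo 0 δ, ∀ᶠ ε in 𝓝[>] (0:ℝ), ∀ᶠ x in 𝓝 x0, ∃ φ : ℝ → ℝ, (∀ s ∈ S x0, |φ s - s| < ε) ∧
      (∀ s ∈ S x0, ∀ s' ∈ S x0, s < s' → φ s < φ s') ∧ ∀ t, F x t = 0 ↔ ∃ s ∈ S x0, φ s = t := by
    intro x0 hx0
    refine local_roots F F' x0 (S x0) (hmem x0) hder (hFc x0 hx0) (hFc' x0 hx0) ?_ ?_
    · intro t ht ht'
      obtain ⟨A, B, hAB⟩ := hsep x0 hx0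
      have := congrArg (Polynomial.eval t) hAB
      rw [eval_add, eval_mul, eval_mul, hPF', ht', hPF, ht] at this
      simp at this
    · filter_upwards [Ioo_mem_nhds hx0.1 hx0.2] with x hx using hbd x hx
  have hcard : ∀ x0 x (φ : ℝ → ℝ), (∀ s ∈ S x0, ∀ s' ∈ S x0, s < s' → φ s < φ s') →
      (∀ t, F x t = 0 ↔ ∃ s ∈ S x0, φ s = t) → (S x).card = (S x0).card := by
    intro x0 x φ h1 h2
    have : S x = (S x0).image φ := by
      ext t; rw [← hmem, h2, Finset.mem_image]
    rw [this, Finset.card_image_of_injOn]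
    exact StrictMonoOn.injOn fun s hs s' hs' h => h1 s hs s' hs' h
  have hconst : ∀ x ∈ Ioo 0 δ, (S x).card = (S (δ/2)).card := by
    intro x hx
    refine isPreconnected_Ioo.constant (f := fun x => (S x).card) (s := Ioo 0 δ) ?_ hx (y := δ/2) ⟨by linarith, by linarith⟩
    intro x0 hx0
    refine ContinuousAt.continuousWithinAt ?_
    obtain ⟨ε, hε⟩ := (hloc x0 hx0).exists
    refine continuousAt_const.congr (f := fun _ => (S x0).card) ?_
    filter_upwards [hε] with x hx
    obtain ⟨φ, -, h1, h2⟩ := hx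
    exact (hcard x0 x φ h1 h2).symm
  set n := (S (δ/2)).card with hn
  refine ⟨n, ?_, fun i x => if h : (S x).card = n then (S x).orderEmbOfFin h i else 0, ?_, ?_, ?_⟩
  · have hmid : δ / 2 ∈ Ioo 0 δ := ⟨by linarith, by linarith⟩
    have h1 : n = (P (δ/2)).roots.card := by
      rw [hn, hS]
      exact Multiset.toFinset_card_of_nodup (nodup_roots (hsep _ hmid))
    rw [h1, card_roots_mod_two _ (hPm _).ne_zero, hPd]
  · intro i x0 hx0
    refine ContinuousAt.continuousWithinAt ?_
    rw [Metric.continuousAt_iff']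
    intro ε hε
    obtain ⟨ε', hε', hlt⟩ := ((hloc x0 hx0).and (nhdsWithin_le_nhds (eventually_lt_nhds hε))).exists
    filter_upwards [hε'] with x hx
    obtain ⟨φ, h0, h1, h2⟩ := hx
    have hc0 := hconst x0 hx0
    have hcx : (S x).card = n := (hcard x0 x φ h1 h2).trans hc0
    have hu := Finset.orderEmbOfFin_unique hcx (f := fun j => φ ((S x0).orderEmbOfFin hc0 j))
      (fun j => by
        rw [← hmem, h2]
        exact ⟨_, Finset.orderEmbOfFin_mem _ _ _, rfl⟩)
      (fun j j' hjj => h1 _ (Finset.orderEmbOfFin_mem _ _ _) _ (Finset.orderEmbOfFin_mem _ _ _)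
        (by simpa using hjj))
    rw [dif_pos hcx, dif_pos hc0, ← congrFun hu i, Real.dist_eq]
    exact (h0 _ (Finset.orderEmbOfFin_mem _ _ _)).trans hlt
  · intro x hx i j hij
    simp only [dif_pos (hconst x hx)] at hij
    exact (S x).orderEmbOfFin (hconst x hx) |>.injective hij
  · intro x hx t
    simp only [dif_pos (hconst x hx)]
    change F x t = 0 ↔ _
    rw [hmem, ← Finset.mem_coe, ← Finset.range_orderEmbOfFin (S x) (hconst x hx), Set.mem_range]

theorem side_arcs (d : ℕ) (b : ℕ → ℝ → ℝ) (Z : ℝ → ℝ → Prop)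
    (hb : ∀ᶠ x in 𝓝[>] (0:ℝ), (∀ i, i < d → ContinuousAt (b i) x) ∧
      (X ^ d + ∑ i ∈ Finset.range d, C (b i x) * X ^ i : ℝ[X]).Separable ∧
      ∀ y : ℝ, (y ^ d + ∑ i ∈ Finset.range d, b i x * y ^ i = 0 ↔ Z x y))
    (hsm : ∀ η > (0:ℝ), ∀ᶠ x in 𝓝[>] (0:ℝ), ∀ y, Z x y → |y| < η) :
    ∃ a₀ > (0:ℝ), ∃ n : ℕ, n % 2 = d % 2 ∧ ∃ y : Fin n → ℝ → ℝ,
      (∀ i, ContinuousOn (y i) (Ico 0 a₀)) ∧ (∀ i, y i 0 = 0) ∧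
      (∀ x ∈ Ioo 0 a₀, Function.Injective fun i => y i x) ∧
      ∀ x ∈ Ioo 0 a₀, ∀ t, Z x t ↔ ∃ i, y i x = t := by
  obtain ⟨δ, hδ, h⟩ := mem_nhdsGT_iff_exists_Ioo_subset.1 (hb.and (hsm 1 one_pos))
  have hδ : 0 < δ := hδ
  obtain ⟨n, hn, y, hy1, hy2, hy3⟩ := root_curves δ hδ d b (fun x hx => (h hx).1.1)
    (fun x hx => (h hx).1.2.1) (fun x hx t ht => ((h hx).2 t (((h hx).1.2.2 t).1 ht)).le)
  have hZ : ∀ x ∈ Ioo 0 δ, ∀ t, Z x t ↔ ∃ i, y i x = t := fun x hx t =>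
    ((h hx).1.2.2 t).symm.trans (hy3 x hx t)
  have heq : ∀ i, EqOn (fun x => if x ≤ 0 then 0 else y i x) (y i) (Ioo 0 δ) := fun i x hx => by
    simp [not_le.2 hx.1]
  refine ⟨δ, hδ, n, hn, fun i x => if x ≤ 0 then 0 else y i x, ?_, ?_, ?_, ?_⟩
  · intro i x hx
    rcases eq_or_lt_of_le hx.1 with h0 | h0
    · subst h0
      refine ContinuousWithinAt.mono ?_ (Ico_subset_Ici_self)
      rw [← continuousWithinAt_Ioi_iff_Ici]
      rw [Metric.continuousWithinAt_iff']
      intro ε hε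
      filter_upwards [hsm ε hε, Ioo_mem_nhdsGT hδ] with x hx hxI
      have := hx (y i x) ((hZ x hxI _).2 ⟨i, rfl⟩)
      simpa [not_le.2 hxI.1, Real.dist_eq] using this
    · have hxI : x ∈ Ioo 0 δ := ⟨h0, hx.2⟩
      refine ContinuousAt.continuousWithinAt ?_
      refine ((hy1 i).continuousAt (Ioo_mem_nhds h0 hx.2)).congr ?_
      filter_upwards [Ioo_mem_nhds h0 hx.2] with z hz using (heq i hz).symm
  · simp
  · intro x hx
    simpa [not_le.2 hx.1] using hy2 x hx
  · intro x hx t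
    simpa [not_le.2 hx.1] using hZ x hx t

theorem small_roots (k : ℕ) (c : ℕ → ℝ → ℝ) (hc : ∀ j, AnalyticAt ℝ (c j) 0)
    (h0 : ∀ j < k, c j 0 = 0) (η : ℝ) (hη : 0 < η) : ∀ᶠ x in 𝓝 (0:ℝ), ∀ y : ℝ,
      y ^ k + ∑ j ∈ Finset.range k, c j x * y ^ j = 0 → |y| < η := by
  have hcont : ContinuousAt (fun x => ∑ j ∈ Finset.range k, |c j x| * (η⁻¹) ^ (k - j)) 0 :=
    tendsto_finsetSum _ fun j _ => ((hc j).continuousAt.abs).mul continuousAt_const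
  have hz : (∑ j ∈ Finset.range k, |c j 0| * (η⁻¹) ^ (k - j)) < 1 := by
    rw [Finset.sum_eq_zero]
    · exact one_pos
    · intro j hj; rw [h0 j (Finset.mem_range.1 hj)]; simp
  filter_upwards [hcont.eventually (eventually_lt_nhds hz)] with x hx y hy
  by_contra hlt
  push Not at hlt
  have hyp : 0 < |y| := hη.trans_le hlt
  have h1 : |y| ^ k ≤ ∑ j ∈ Finset.range k, |c j x| * |y| ^ j := by
    have : y ^ k = - ∑ j ∈ Finset.range k, c j x * y ^ j := by linarith
    rw [← abs_pow, this, abs_neg]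
    refine (Finset.abs_sum_le_sum_abs _ _).trans (le_of_eq ?_)
    exact Finset.sum_congr rfl fun j _ => by rw [abs_mul, abs_pow]
  have h2 : ∑ j ∈ Finset.range k, |c j x| * |y| ^ j ≤
      ∑ j ∈ Finset.range k, |y| ^ k * (|c j x| * (η⁻¹) ^ (k - j)) := by
    refine Finset.sum_le_sum fun j hj => ?_
    have hjk := (Finset.mem_range.1 hj).le
    have h3 : |y| ^ j ≤ |y| ^ k * (η⁻¹) ^ (k - j) := by
      have h4 : |y| ^ k = |y| ^ j * |y| ^ (k - j) := by rw [← pow_add]; congr 1; omega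
      rw [h4, mul_assoc, ← mul_pow]
      refine le_mul_of_one_le_right (by positivity) (one_le_pow₀ ?_)
      rw [← div_eq_mul_inv, one_le_div hη]; exact hlt
    calc |c j x| * |y| ^ j ≤ |c j x| * (|y| ^ k * (η⁻¹) ^ (k - j)) := by gcongr
      _ = _ := by ring
  rw [← Finset.mul_sum] at h2
  have : |y| ^ k * (∑ j ∈ Finset.range k, |c j x| * (η⁻¹) ^ (k - j)) < |y| ^ k * 1 :=
    mul_lt_mul_of_pos_left hx (by positivity)
  linarith

theorem model_arcs (k : ℕ) (hk : k ≠ 0) (c : ℕ → ℝ → ℝ) (hc : ∀ j, AnalyticAt ℝ (c j) 0)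
    (h0 : ∀ j < k, c j 0 = 0) (a₁ : ℝ) (ha₁ : 0 < a₁) :
    ∃ a > (0:ℝ), a ≤ a₁ ∧ ∃ r : ℕ, ∃ γ : Fin (2 * r) → ℝ → ℝ × ℝ,
      (∀ i, ContinuousOn (γ i) (Icc 0 1)) ∧ (∀ i, InjOn (γ i) (Icc 0 1)) ∧ (∀ i, γ i 0 = 0) ∧
      (∀ i j, i ≠ j → ∀ s ∈ Ioc (0:ℝ) 1, ∀ t ∈ Ioc (0:ℝ) 1, γ i s ≠ γ j t) ∧
      ∀ x y, |x| ≤ a → (y ^ k + ∑ j ∈ Finset.range k, c j x * y ^ j = 0 ↔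
        (x, y) = ((0, 0) : ℝ × ℝ) ∨ ∃ i, ∃ t ∈ Icc (0:ℝ) 1, γ i t = (x, y)) := by
  obtain ⟨d, b, hb⟩ := squarefree_part c hc k
  set W : ℝ → ℝ → ℝ := fun x y => y ^ k + ∑ j ∈ Finset.range k, c j x * y ^ j with hW
  have hsm := small_roots k c hc h0
  have tp : Tendsto (fun x : ℝ => x) (𝓝[>] 0) (𝓝[≠] 0) :=
    tendsto_id.mono_right (nhdsWithin_mono _ fun x (hx : 0 < x) => ne_of_gt hx)
  have tn : Tendsto (fun x : ℝ => -x) (𝓝[>] 0) (𝓝[≠] 0) := by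
    refine tendsto_nhdsWithin_iff.2 ⟨?_, ?_⟩
    · have : Tendsto (fun x : ℝ => -x) (𝓝 0) (𝓝 (-0)) := continuous_neg.tendsto 0
      rw [neg_zero] at this
      exact this.mono_left nhdsWithin_le_nhds
    · filter_upwards [self_mem_nhdsWithin] with x hx
      have : (0:ℝ) < x := hx
      simp [this.ne']
  obtain ⟨ap, hap, n, hn, y, hy1, hy2, hy3, hy4⟩ := side_arcs d b (fun x y => W x y = 0)
    (tp.eventually hb) (fun η hη => tp.eventually (nhdsWithin_le_nhds (hsm η hη)))
  obtain ⟨an, han, m, hm, z, hz1, hz2, hz3, hz4⟩ := side_arcs d (fun i x => b i (-x))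
    (fun x y => W (-x) y = 0)
    (by
      filter_upwards [tn.eventually hb] with x hx
      refine ⟨fun i hi => ?_, hx.2.1, hx.2.2⟩
      exact ContinuousAt.comp (g := b i) (f := fun x : ℝ => -x) (hx.1 i hi) continuous_neg.continuousAt)
    (fun η hη => tn.eventually (nhdsWithin_le_nhds (hsm η hη)))
  obtain ⟨r, hr⟩ : ∃ r, n + m = 2 * r := ⟨(n + m) / 2, by omega⟩
  set a := min a₁ (min ap an / 2) with ha
  have ha0 : 0 < a := lt_min ha₁ (half_pos (lt_min hap han))
  have hm0 : 0 < min ap an := lt_min hap han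
  have hap' : a < ap := by
    have h1 : a ≤ min ap an / 2 := min_le_right _ _
    have h2 : min ap an ≤ ap := min_le_left _ _
    linarith
  have han' : a < an := by
    have h1 : a ≤ min ap an / 2 := min_le_right _ _
    have h2 : min ap an ≤ an := min_le_right _ _
    linarith
  let e : Fin (2 * r) ≃ Fin n ⊕ Fin m := (finCongr hr.symm).trans finSumFinEquiv.symm
  let G : Fin n ⊕ Fin m → ℝ → ℝ × ℝ := fun s t =>
    Sum.elim (fun i => (a * t, y i (a * t))) (fun i => (-(a * t), z i (a * t))) s
  have hIc : ∀ t ∈ Icc (0:ℝ) 1, 0 ≤ a * t ∧ a * t ≤ a := fun t ht =>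
    ⟨mul_nonneg ha0.le ht.1, mul_le_of_le_one_right ha0.le ht.2⟩
  have hIo : ∀ t ∈ Ioc (0:ℝ) 1, 0 < a * t ∧ a * t ≤ a := fun t ht =>
    ⟨mul_pos ha0 ht.1, mul_le_of_le_one_right ha0.le ht.2⟩
  have cm : ContinuousOn (fun t : ℝ => a * t) (Icc 0 1) := by fun_prop
  have Gc : ∀ s, ContinuousOn (G s) (Icc 0 1) := by
    rintro (i | i)
    · exact cm.prodMk ((hy1 i).comp cm fun t ht => ⟨(hIc t ht).1, (hIc t ht).2.trans_lt hap'⟩)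
    · exact cm.neg.prodMk ((hz1 i).comp cm fun t ht => ⟨(hIc t ht).1, (hIc t ht).2.trans_lt han'⟩)
  have Gi : ∀ s, InjOn (G s) (Icc 0 1) := by
    rintro (i | i) t _ t' _ h
    · have := congrArg Prod.fst h
      simpa [G, ha0.ne'] using this
    · have := congrArg Prod.fst h
      simpa [G, ha0.ne'] using this
  have G0 : ∀ s, G s 0 = 0 := by
    rintro (i | i)
    · simp [G, hy2]
    · simp [G, hz2]
  have Gd : ∀ i j, i ≠ j → ∀ s ∈ Ioc (0:ℝ) 1, ∀ t ∈ Ioc (0:ℝ) 1, G i s ≠ G j t := by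
    rintro (i | i) (j | j) hij s hs t ht h
    · have h1 : a * s = a * t := congrArg Prod.fst h
      have h2 : y i (a * s) = y j (a * t) := congrArg Prod.snd h
      rw [← h1] at h2
      exact hij (congrArg _ (hy3 _ ⟨(hIo s hs).1, (hIo s hs).2.trans_lt hap'⟩ h2))
    · have h1 : a * s = -(a * t) := congrArg Prod.fst h
      linarith [(hIo s hs).1, (hIo t ht).1]
    · have h1 : -(a * s) = a * t := congrArg Prod.fst h
      linarith [(hIo s hs).1, (hIo t ht).1]
    · have h1 : -(a * s) = -(a * t) := congrArg Prod.fst h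
      have h1 : a * s = a * t := by linarith
      have h2 : z i (a * s) = z j (a * t) := congrArg Prod.snd h
      rw [← h1] at h2
      exact hij (congrArg _ (hz3 _ ⟨(hIo s hs).1, (hIo s hs).2.trans_lt han'⟩ h2))
  have W0 : ∀ y, W 0 y = 0 ↔ y = 0 := by
    intro y
    have : W 0 y = y ^ k := by
      simp only [hW]
      rw [Finset.sum_eq_zero, add_zero]
      intro j hj; rw [h0 j (Finset.mem_range.1 hj), zero_mul]
    rw [this, pow_eq_zero_iff hk]
  have key : ∀ x y, |x| ≤ a → (W x y = 0 ↔
      (x, y) = ((0, 0) : ℝ × ℝ) ∨ ∃ i, ∃ t ∈ Icc (0:ℝ) 1, G i t = (x, y)) := by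
    intro x u hx
    constructor
    · intro h
      rcases lt_trichotomy x 0 with hx0 | hx0 | hx0
      · right
        rw [abs_of_neg hx0] at hx
        obtain ⟨i, hi⟩ := (hz4 (-x) ⟨by linarith, by linarith⟩ u).1 (by rw [neg_neg]; exact h)
        have e1 : a * (-x / a) = -x := by field_simp
        refine ⟨Sum.inr i, -x / a, ⟨by apply div_nonneg <;> linarith, by rw [div_le_one ha0]; exact hx⟩, ?_⟩
        simp only [G, Sum.elim_inr, e1, hi, neg_neg]
      · left
        subst hx0
        rw [(W0 u).1 h]
      · right
        rw [abs_of_pos hx0] at hx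
        obtain ⟨i, hi⟩ := (hy4 x ⟨by linarith, by linarith⟩ u).1 h
        have e1 : a * (x / a) = x := by field_simp
        refine ⟨Sum.inl i, x / a, ⟨by apply div_nonneg <;> linarith, by rw [div_le_one ha0]; exact hx⟩, ?_⟩
        simp only [G, Sum.elim_inl, e1, hi]
    · rintro (h | ⟨i, t, ht, h⟩)
      · rw [Prod.mk.injEq] at h
        rw [h.1, h.2]; exact (W0 0).2 rfl
      · rcases eq_or_lt_of_le ht.1 with ht0 | ht0
        · rw [← ht0, G0] at h
          have h1 : (0:ℝ) = x := congrArg Prod.fst h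
          have h2 : (0:ℝ) = u := congrArg Prod.snd h
          rw [← h1, ← h2]; exact (W0 0).2 rfl
        · have hI := hIo t ⟨ht0, ht.2⟩
          rcases i with i | i
          · have h1 : a * t = x := congrArg Prod.fst h
            have h2 : y i (a * t) = u := congrArg Prod.snd h
            rw [← h1]
            exact (hy4 _ ⟨hI.1, hI.2.trans_lt hap'⟩ u).2 ⟨i, h2⟩
          · have h1 : -(a * t) = x := congrArg Prod.fst h
            have h2 : z i (a * t) = u := congrArg Prod.snd h
            rw [← h1]
            exact (hz4 _ ⟨hI.1, hI.2.trans_lt han'⟩ u).2 ⟨i, h2⟩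
  refine ⟨a, ha0, min_le_left _ _, r, fun i => G (e i), fun i => Gc _, fun i => Gi _, fun i => G0 _,
    fun i j hij => Gd _ _ fun h => hij (e.injective h), ?_⟩
  intro x u hx
  rw [key x u hx]
  exact or_congr Iff.rfl (e.surjective.exists (p := fun s => ∃ t ∈ Icc (0:ℝ) 1, G s t = (x, u)))

theorem good_direction (f : ℝ × ℝ → ℝ) (p : ℝ × ℝ) (hf : AnalyticAt ℝ f p)
    (hnz : ∀ U ∈ nhds p, ∃ q ∈ U, f q ≠ 0) :
    ∃ w : ℝ × ℝ, ¬ ∀ᶠ t in 𝓝 (0:ℝ), f (p + t • w) = 0 := by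
  obtain ⟨R, hR, hball⟩ := Metric.eventually_nhds_iff_ball.1 hf.eventually_analyticAt
  obtain ⟨q, hq, hfq⟩ := hnz _ (Metric.ball_mem_nhds p hR)
  refine ⟨q - p, fun h => hfq ?_⟩
  have hA : AnalyticOnNhd ℝ (fun t : ℝ => f (p + t • (q - p))) (Icc 0 1) := by
    intro t ht
    have h1 : p + t • (q - p) ∈ Metric.ball p R := by
      rw [mem_ball_iff_norm, add_sub_cancel_left, norm_smul, Real.norm_eq_abs, abs_of_nonneg ht.1]
      refine lt_of_le_of_lt (mul_le_of_le_one_left (norm_nonneg _) ht.2) ?_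
      rwa [← mem_ball_iff_norm]
    exact AnalyticAt.comp' (g := f) (hball _ h1)
      (analyticAt_const.add (analyticAt_id.smul analyticAt_const))
  have := hA.eqOn_zero_of_preconnected_of_eventuallyEq_zero isPreconnected_Icc
    (left_mem_Icc.2 zero_le_one) h (right_mem_Icc.2 zero_le_one)
  simpa using this

theorem nodal_main (f : ℝ × ℝ → ℝ) (p : ℝ × ℝ) (hf : AnalyticAt ℝ f p) (hfp : f p = 0)
    (hnz : ∀ U ∈ nhds p, ∃ q ∈ U, f q ≠ 0) :
    ∃ ε > (0 : ℝ), ∃ r : ℕ, ∃ γ : Fin (2 * r) → ℝ → ℝ × ℝ,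
      (∀ i, ContinuousOn (γ i) (Set.Icc 0 1)) ∧
      (∀ i, Set.InjOn (γ i) (Set.Icc 0 1)) ∧
      (∀ i, γ i 0 = p) ∧
      (∀ i, p ∉ γ i '' Set.Ioc 0 1) ∧
      (∀ i j, i ≠ j → (γ i '' Set.Ioc 0 1) ∩ (γ j '' Set.Ioc 0 1) = ∅) ∧
      {q ∈ Metric.ball p ε | f q = 0} =
        ({p} ∪ ⋃ i, γ i '' Set.Icc 0 1) ∩ Metric.ball p ε := by
  obtain ⟨w, hw⟩ := good_direction f p hf hnz
  have hD : 0 < w.1 ^ 2 + w.2 ^ 2 := by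
    by_contra hle
    have e1 : w.1 = 0 := by nlinarith [sq_nonneg w.1, sq_nonneg w.2]
    have e2 : w.2 = 0 := by nlinarith [sq_nonneg w.1, sq_nonneg w.2]
    have : w = 0 := Prod.ext e1 e2
    apply hw
    simp [this, hfp]
  set D := w.1 ^ 2 + w.2 ^ 2 with hDdef
  let L : ℝ × ℝ → ℝ × ℝ := fun v => (p.1 + (v.1 * (-w.2) + v.2 * w.1), p.2 + (v.1 * w.1 + v.2 * w.2))
  have hL0 : L 0 = p := by ext <;> simp [L]
  have hLa : AnalyticAt ℝ L 0 := by
    have h1 : AnalyticAt ℝ (fun v : ℝ × ℝ => v.1) 0 := analyticAt_fst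
    have h2 : AnalyticAt ℝ (fun v : ℝ × ℝ => v.2) 0 := analyticAt_snd
    exact AnalyticAt.prod
      (analyticAt_const.add ((h1.mul analyticAt_const).add (h2.mul analyticAt_const)))
      (analyticAt_const.add ((h1.mul analyticAt_const).add (h2.mul analyticAt_const)))
  obtain ⟨ρ, hρ, σ, hσ, k, c, hc, hc0, hev⟩ := wprep (fun v => f (L v))
    (AnalyticAt.comp' (g := f) (by rw [hL0]; exact hf) hLa) (by
      intro h; apply hw
      filter_upwards [h] with t ht
      rw [← ht]; congr 1
      ext <;> simp [L])
  obtain ⟨a₁, ha₁, hball⟩ := Metric.eventually_nhds_iff_ball.1 hev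
  have hk : k ≠ 0 := by
    have h1 := (hball 0 (Metric.mem_ball_self ha₁) 0 (by norm_num)).1 (by
      have : ((ρ * 0, σ * 0) : ℝ × ℝ) = 0 := by ext <;> simp
      simp only [this, hL0, hfp])
    rintro rfl
    simp at h1
  obtain ⟨a, ha, haa, r, γ, g1, g2, g3, g4, g5⟩ := model_arcs k hk c hc hc0 (a₁ / 2) (half_pos ha₁)
  let Ψ : ℝ × ℝ → ℝ × ℝ := fun v => L (ρ * v.1, σ * v.2)
  let Θ : ℝ × ℝ → ℝ × ℝ := fun q =>
    ((((q.1 - p.1) * (-w.2) + (q.2 - p.2) * w.1) / D) / ρ, (((q.1 - p.1) * w.1 + (q.2 - p.2) * w.2) / D) / σ)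
  have hΨc : Continuous Ψ := by fun_prop
  have hΘc : Continuous Θ := by fun_prop
  have hΘΨ : ∀ v, Θ (Ψ v) = v := by
    intro v
    have hDne := hD.ne'
    ext
    · simp only [Θ, Ψ, L]; field_simp; rw [hDdef]; ring
    · simp only [Θ, Ψ, L]; field_simp; rw [hDdef]; ring
  have hΨΘ : ∀ q, Ψ (Θ q) = q := by
    intro q
    have hDne := hD.ne'
    ext
    · simp only [Θ, Ψ, L]; field_simp; rw [hDdef]; ring
    · simp only [Θ, Ψ, L]; field_simp; rw [hDdef]; ring
  have hΨ0 : Ψ 0 = p := by rw [← hL0]; simp [Ψ, L]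
  have hΘp : Θ p = 0 := by rw [← hΨ0, hΘΨ]
  have hΨi : Function.Injective Ψ := Function.LeftInverse.injective hΘΨ
  have hU : ∀ᶠ q in 𝓝 p, |(Θ q).1| < a ∧ |(Θ q).2| < 1/2 := by
    have h1 : ContinuousAt (fun q => |(Θ q).1|) p := by fun_prop
    have h2 : ContinuousAt (fun q => |(Θ q).2|) p := by fun_prop
    exact (h1.eventually_lt_const (by simpa [hΘp] using ha)).and
      (h2.eventually_lt_const (by simp [hΘp]))
  obtain ⟨ε, hε, hεb⟩ := Metric.eventually_nhds_iff_ball.1 hU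
  have hγne : ∀ i, ∀ t ∈ Ioc (0:ℝ) 1, γ i t ≠ 0 := by
    intro i t ht h
    rw [← g3 i] at h
    exact ht.1.ne' (g2 i ⟨ht.1.le, ht.2⟩ (left_mem_Icc.2 zero_le_one) h)
  refine ⟨ε, hε, r, fun i t => Ψ (γ i t), fun i => hΨc.comp_continuousOn (g1 i),
    fun i => hΨi.comp_injOn (g2 i), fun i => ?_, ?_, ?_, ?_⟩
  · simp only [g3, hΨ0]
  · rintro i ⟨t, ht, h⟩
    rw [← hΨ0] at h
    exact hγne i t ht (hΨi h)
  · intro i j hij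
    rw [Set.eq_empty_iff_forall_notMem]
    rintro q ⟨⟨s, hs, h1⟩, ⟨t, ht, h2⟩⟩
    exact g4 i j hij s hs t ht (hΨi (h1.trans h2.symm))
  · ext q
    simp only [Set.mem_setOf_eq, Set.mem_inter_iff, and_comm (b := q ∈ Metric.ball p ε)]
    rw [and_congr_right_iff]
    intro hq
    obtain ⟨hx, hy⟩ := hεb q hq
    have hW := (hball (Θ q).1 (by rw [mem_ball_zero_iff, Real.norm_eq_abs]; linarith) (Θ q).2 hy.le).trans
      (g5 (Θ q).1 (Θ q).2 hx.le)
    have hfq : f (L (ρ * (Θ q).1, σ * (Θ q).2)) = f q := congrArg f (hΨΘ q)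
    rw [hfq] at hW
    rw [hW, Set.mem_union, Set.mem_singleton_iff, Set.mem_iUnion]
    refine or_congr ?_ (exists_congr fun i => exists_congr fun t => and_congr_right fun _ => ?_)
    · constructor
      · intro h
        have h : Θ q = 0 := h
        rw [← hΨΘ q, h, hΨ0]
      · rintro rfl
        exact hΘp
    · constructor
      · intro h
        have h : γ i t = Θ q := h
        simp only [h, hΨΘ]
      · intro h
        have h : Ψ (γ i t) = q := h
        rw [← h, hΘΨ]

end NodalAux

/-- Local structure of the nodal set of a real analytic function of two variables
(Lojasiewicz): near a non-isolated zero `p`, the zero set consists of an even number of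
injective arcs emanating from `p`, pairwise disjoint away from `p`; the case `r = 0`
corresponds to an isolated zero. -/
theorem stmt_7 (f : ℝ × ℝ → ℝ) (p : ℝ × ℝ) (hf : AnalyticAt ℝ f p) (hfp : f p = 0)
    (hnz : ∀ U ∈ nhds p, ∃ q ∈ U, f q ≠ 0) :
    ∃ ε > (0 : ℝ), ∃ r : ℕ, ∃ γ : Fin (2 * r) → ℝ → ℝ × ℝ,
      (∀ i, ContinuousOn (γ i) (Set.Icc 0 1)) ∧
      (∀ i, Set.InjOn (γ i) (Set.Icc 0 1)) ∧
      (∀ i, γ i 0 = p) ∧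
      (∀ i, p ∉ γ i '' Set.Ioc 0 1) ∧
      (∀ i j, i ≠ j → (γ i '' Set.Ioc 0 1) ∩ (γ j '' Set.Ioc 0 1) = ∅) ∧
      {q ∈ Metric.ball p ε | f q = 0} =
        ({p} ∪ ⋃ i, γ i '' Set.Icc 0 1) ∩ Metric.ball p ε := by
  exact NodalAux.nodal_main f p hf hfp hnz
end
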